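/- Let N ≥ 1 be an integer. There exist ε > 0 and C > 0 such that the following holds. Let (u,v) be a smooth solution of the Thirring system on [1,∞) × ℝ such that u, v and all their derivatives are Schwartz in x locally uniformly in t, and let f = u(1,·), g = v(1,·). If D := ‖⟨x⟩^{3+N/2} f‖_{H^{N+4}} + ‖⟨x⟩^{3+N/2} g‖_{H^{N+4}} ≤ ε, then for every (t,x) with 1 ≤ t ≤ ⟨x⟩ one has |u(t,x)| + |v(t,x)| ≤ C ⟨x⟩^{−N/2} D. -/

import Mathlib

noncomputable section
open MeasureTheory

/-- Partial derivative in the first (time) variable. -/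
def pt (u : ℝ → ℝ → ℂ) : ℝ → ℝ → ℂ := fun t x => deriv (fun s => u s x) t
/-- Partial derivative in the second (space) variable. -/
def px (u : ℝ → ℝ → ℂ) : ℝ → ℝ → ℂ := fun t x => deriv (fun y => u t y) x

/-- Japanese bracket ⟨x⟩ = (1+x²)^{1/2}. -/
def jb (x : ℝ) : ℝ := Real.sqrt (1 + x ^ 2)

/-- Sobolev norm ‖g‖_{H^k} = (Σ_{j=0}^k ∫ |∂_x^j g|² dx)^{1/2}. -/
def sobNorm (k : ℕ) (f : ℝ → ℂ) : ℝ :=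
  Real.sqrt (∑ j ∈ Finset.range (k + 1), ∫ x : ℝ, ‖deriv^[j] f x‖ ^ 2)

/-- Weighted Sobolev norm ‖⟨x⟩^s f‖_{H^k}. -/
def wSobNorm (s : ℝ) (k : ℕ) (f : ℝ → ℂ) : ℝ :=
  sobNorm k (fun x => ((jb x ^ s : ℝ) : ℂ) * f x)

/-- u, v and all their derivatives are Schwartz in x, locally uniformly in t. -/
def SchwartzLocUnif (u : ℝ → ℝ → ℂ) : Prop :=
  ∀ (a b n : ℕ) (A : ℝ), ∃ C : ℝ, ∀ t ∈ Set.Icc (1 : ℝ) A, ∀ x : ℝ,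
    |x| ^ n * ‖pt^[a] (px^[b] u) t x‖ ≤ C

/-- The Thirring (cubic Dirac) system: (∂_t+∂_x)u = iv + i|v|²u, (∂_t-∂_x)v = iu + i|u|²v
on [1,∞) × ℝ. -/
def Thirring (u v : ℝ → ℝ → ℂ) : Prop :=
  ∀ t x : ℝ, 1 ≤ t →
    pt u t x + px u t x = Complex.I * v t x + Complex.I * (‖v t x‖ ^ 2 : ℝ) * u t x ∧
    pt v t x - px v t x = Complex.I * u t x + Complex.I * (‖u t x‖ ^ 2 : ℝ) * v t x

namespace Thir
open Finset

/-- Leibniz sum of two sequences. -/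
def L2 (A B : ℕ → ℂ) (n : ℕ) : ℂ :=
  ∑ p ∈ antidiagonal n, (n.choose p.1 : ℂ) * (A p.1 * B p.2)

/-- Leibniz sum for |A|². -/
def M2 (A : ℕ → ℂ) (n : ℕ) : ℂ := L2 A (fun k => (starRingEnd ℂ) (A k)) n

/-- Leibniz sum for |A|² B. -/
def F3 (A B : ℕ → ℂ) (n : ℕ) : ℂ := L2 (M2 A) B n

lemma L2_hasDeriv {s : Set ℝ} {x : ℝ} {A B : ℕ → ℝ → ℂ}
    (hA : ∀ k, HasDerivWithinAt (A k) (A (k+1) x) s x)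
    (hB : ∀ k, HasDerivWithinAt (B k) (B (k+1) x) s x) (n : ℕ) :
    HasDerivWithinAt (fun y => L2 (fun k => A k y) (fun k => B k y) n)
      (L2 (fun k => A k x) (fun k => B k x) (n+1)) s x := by
  unfold L2
  have h := HasDerivWithinAt.fun_sum (u := antidiagonal n) (x := x) (s := s)
    (A := fun p y => (n.choose p.1 : ℂ) * (A p.1 y * B p.2 y))
    (A' := fun p => (n.choose p.1 : ℂ) * (A (p.1+1) x * B p.2 x + A p.1 x * B (p.2+1) x))
    (fun p _ => ((hA p.1).mul (hB p.2)).const_mul _)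
  refine h.congr_deriv ?_
  rw [Finset.sum_antidiagonal_choose_succ_mul (fun a b => A a x * B b x) n, add_comm,
    ← Finset.sum_add_distrib]
  refine Finset.sum_congr rfl fun p hp => ?_
  rw [Finset.HasAntidiagonal.mem_antidiagonal] at hp
  have : n.choose p.2 = n.choose p.1 := by
    rw [← hp, add_comm, Nat.choose_symm_add, add_comm]
  rw [this]; ring

lemma hasDeriv_conj {s : Set ℝ} {x : ℝ} {f : ℝ → ℂ} {f' : ℂ} (h : HasDerivWithinAt f f' s x) :
    HasDerivWithinAt (fun y => (starRingEnd ℂ) (f y)) ((starRingEnd ℂ) f') s x := by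
  simpa using h.star

lemma F3_hasDeriv {s : Set ℝ} {x : ℝ} {A B : ℕ → ℝ → ℂ}
    (hA : ∀ k, HasDerivWithinAt (A k) (A (k+1) x) s x)
    (hB : ∀ k, HasDerivWithinAt (B k) (B (k+1) x) s x) (n : ℕ) :
    HasDerivWithinAt (fun y => F3 (fun k => A k y) (fun k => B k y) n)
      (F3 (fun k => A k x) (fun k => B k x) (n+1)) s x := by
  unfold F3
  refine L2_hasDeriv (A := fun k y => M2 (fun k => A k y) k) ?_ hB n
  intro k
  unfold M2
  exact L2_hasDeriv (B := fun k y => (starRingEnd ℂ) (A k y)) hA (fun k => hasDeriv_conj (hA k)) k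

lemma F3_zero (A B : ℕ → ℂ) : F3 A B 0 = A 0 * (starRingEnd ℂ) (A 0) * B 0 := by
  simp [F3, M2, L2]

/-- combinatorial constant -/
def cF (n : ℕ) : ℝ :=
  ∑ p ∈ antidiagonal n, (n.choose p.1 : ℝ) * ∑ q ∈ antidiagonal p.1, (p.1.choose q.1 : ℝ)

lemma cF_nonneg (n : ℕ) : 0 ≤ cF n := by unfold cF; positivity

lemma trip {A B : ℕ → ℂ} {I j : ℕ} {q S : ℝ} (hq : 0 ≤ q)
    (hA : ∀ i ≤ I, ‖A i‖ ≤ q) (hB : ∀ i ≤ I, ‖B i‖ ≤ q) (hj : j ≤ 2 * I + 1)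
    {c d b : ℕ} (h : c + d + b = j) (hc : ‖A c‖ ≤ S) (hd : ‖A d‖ ≤ S) (hb : ‖B b‖ ≤ S) :
    ‖A c‖ * ‖A d‖ * ‖B b‖ ≤ q ^ 2 * S := by
  have hS : 0 ≤ S := (norm_nonneg _).trans hc
  rcases le_or_gt c I with h1 | h1
  · rcases le_or_gt d I with h2 | h2
    · calc _ ≤ q * q * S := by gcongr <;> first | exact hA _ h1 | exact hA _ h2 
        _ = _ := by ring
    · have h3 : b ≤ I := by omega
      calc _ ≤ q * S * q := by gcongr <;> first | exact hA _ h1 | exact hB _ h3 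
        _ = _ := by ring
  · have h2 : d ≤ I := by omega
    have h3 : b ≤ I := by omega
    calc _ ≤ S * q * q := by gcongr <;> first | exact hA _ h2 | exact hB _ h3 
      _ = _ := by ring

lemma F3_bound {A B : ℕ → ℂ} {I j : ℕ} {q S : ℝ} (hq : 0 ≤ q)
    (hA : ∀ i ≤ I, ‖A i‖ ≤ q) (hB : ∀ i ≤ I, ‖B i‖ ≤ q) (hj : j ≤ 2 * I + 1)
    (hSA : ∀ k ≤ j, ‖A k‖ ≤ S) (hSB : ∀ k ≤ j, ‖B k‖ ≤ S) :
    ‖F3 A B j‖ ≤ cF j * (q ^ 2 * S) := by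
  unfold F3 L2 cF
  rw [Finset.sum_mul]
  refine norm_sum_le_of_le _ fun p hp => ?_
  rw [Finset.HasAntidiagonal.mem_antidiagonal] at hp
  rw [norm_mul, norm_mul, Complex.norm_natCast, mul_assoc]
  refine mul_le_mul_of_nonneg_left ?_ (Nat.cast_nonneg _)
  unfold M2 L2
  refine (mul_le_mul_of_nonneg_right (norm_sum_le _ _) (norm_nonneg _)).trans ?_
  rw [Finset.sum_mul, Finset.sum_mul]
  refine Finset.sum_le_sum fun r hr => ?_
  rw [Finset.HasAntidiagonal.mem_antidiagonal] at hr
  rw [norm_mul, norm_mul, Complex.norm_natCast, RCLike.norm_conj, mul_assoc]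
  refine mul_le_mul_of_nonneg_left ?_ (Nat.cast_nonneg _)
  exact trip (c := r.1) (d := r.2) (b := p.2) hq hA hB hj (by omega) (hSA _ (by omega)) (hSA _ (by omega)) (hSB _ (by omega))

lemma R_bound {A B : ℕ → ℂ} {I j : ℕ} {q S : ℝ} (hq : 0 ≤ q)
    (hA : ∀ i ≤ I, ‖A i‖ ≤ q) (hB : ∀ i ≤ I, ‖B i‖ ≤ q) (hj : j ≤ 2 * I + 1)
    (hS : 0 ≤ S)
    (hSA : ∀ k ≤ j, ‖A k‖ ≤ S) (hSB : ∀ k < j, ‖B k‖ ≤ S) :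
    ‖F3 A B j - A 0 * (starRingEnd ℂ) (A 0) * B j‖ ≤ cF j * (q ^ 2 * S) := by
  have key : F3 A B j - A 0 * (starRingEnd ℂ) (A 0) * B j
      = F3 A (fun k => if k = j then 0 else B k) j := by
    have : A 0 * (starRingEnd ℂ) (A 0) * B j = F3 A (fun k => if k = j then B k else 0) j := by
      unfold F3 L2
      rw [Finset.sum_eq_single (0, j)]
      · simp [M2, L2]
      · intro p hp hne
        rw [Finset.HasAntidiagonal.mem_antidiagonal] at hp
        have : p.2 ≠ j := by
          intro h; apply hne; ext <;> simp <;> omega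
        simp [this]
      · simp
    rw [this]
    unfold F3 L2
    rw [← Finset.sum_sub_distrib]
    refine Finset.sum_congr rfl fun p hp => ?_
    dsimp only; split_ifs <;> ring
  rw [key]
  refine F3_bound hq hA (fun i hi => ?_) hj hSA (fun k hk => ?_)
  · split_ifs
    · simpa using hq
    · exact hB i hi
  · split_ifs
    · simpa using hS
    · exact hSB k (by omega)

/-- sums of norms -/
def SN (A : ℕ → ℂ) (j : ℕ) : ℝ := ∑ k ∈ range (j+1), ‖A k‖
/-- sums of squares of norms -/
def SQ (A : ℕ → ℂ) (j : ℕ) : ℝ := ∑ k ∈ range (j+1), ‖A k‖ ^ 2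

lemma SN_nonneg (A : ℕ → ℂ) (j : ℕ) : 0 ≤ SN A j := by unfold SN; positivity
lemma SQ_nonneg (A : ℕ → ℂ) (j : ℕ) : 0 ≤ SQ A j := by unfold SQ; positivity
lemma le_SN (A : ℕ → ℂ) {k j : ℕ} (h : k ≤ j) : ‖A k‖ ≤ SN A j :=
  Finset.single_le_sum (f := fun k => ‖A k‖) (fun _ _ => norm_nonneg _) (by simp; omega)
lemma le_SQ (A : ℕ → ℂ) {k j : ℕ} (h : k ≤ j) : ‖A k‖ ^ 2 ≤ SQ A j :=
  Finset.single_le_sum (f := fun k => ‖A k‖ ^ 2) (fun _ _ => by positivity) (by simp; omega)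
lemma SN_mono (A : ℕ → ℂ) {k j : ℕ} (h : k ≤ j) : SN A k ≤ SN A j :=
  Finset.sum_le_sum_of_subset_of_nonneg (range_mono (by omega)) (fun _ _ _ => norm_nonneg _)
lemma SN_sq_le (A : ℕ → ℂ) (j : ℕ) : SN A j ^ 2 ≤ (j + 1) * SQ A j := by
  have := sq_sum_le_card_mul_sum_sq (s := range (j+1)) (f := fun k => ‖A k‖)
  simpa [SN, SQ] using this
lemma SQ_le_SN_sq (A : ℕ → ℂ) (j : ℕ) : SQ A j ≤ SN A j ^ 2 := by
  unfold SQ SN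
  exact Finset.sum_sq_le_sq_sum_of_nonneg (fun _ _ => norm_nonneg _)

/-- total constant -/
def KF (J : ℕ) : ℝ := 1 + ∑ k ∈ range (J+1), cF k
lemma KF_ge_one (J : ℕ) : 1 ≤ KF J := by
  have : 0 ≤ ∑ k ∈ range (J+1), cF k := Finset.sum_nonneg fun k _ => cF_nonneg k
  unfold KF; linarith
lemma cF_le_KF {k J : ℕ} (h : k ≤ J) : cF k ≤ KF J := by
  have := Finset.single_le_sum (f := cF) (s := range (J+1)) (fun k _ => cF_nonneg k)
    (show k ∈ range (J+1) by simp; omega)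
  unfold KF; linarith

/-- The pointwise consequence u_k ≲ v_{≤ k+1}. -/
lemma SU_le {A B : ℕ → ℂ} {I J j : ℕ} {q : ℝ} (hq : 0 ≤ q)
    (hA : ∀ i ≤ I, ‖A i‖ ≤ q) (hB : ∀ i ≤ I, ‖B i‖ ≤ q) (hJ : J ≤ 2 * I + 1)
    (hj : j < J) (hsmall : (J + 1) * KF J * q ^ 2 ≤ 1 / 2)
    (hV : ∀ k, B (k+1) = -(Complex.I / 2) * (A k + F3 A B k)) :
    SN A j ≤ 5 * SN B (j+1) := by
  have h1 : ∀ k ≤ j, ‖A k‖ ≤ 2 * ‖B (k+1)‖ + KF J * (q ^ 2 * (SN A j + SN B j)) := by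
    intro k hk
    have e : A k = 2 * Complex.I * B (k+1) - F3 A B k := by
      rw [hV]; linear_combination (A k + F3 A B k) * Complex.I_sq
    have hF : ‖F3 A B k‖ ≤ cF k * (q ^ 2 * (SN A j + SN B j)) := by
      refine F3_bound hq hA hB (by omega) (fun i hi => ?_) (fun i hi => ?_)
      · linarith [le_SN A (show i ≤ j by omega), SN_nonneg B j]
      · linarith [le_SN B (show i ≤ j by omega), SN_nonneg A j]
    have hc : cF k * (q ^ 2 * (SN A j + SN B j)) ≤ KF J * (q ^ 2 * (SN A j + SN B j)) := by
      have := SN_nonneg A j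
      have := SN_nonneg B j
      gcongr
      exact cF_le_KF (by omega)
    calc ‖A k‖ = ‖2 * Complex.I * B (k+1) - F3 A B k‖ := by rw [← e]
      _ ≤ ‖2 * Complex.I * B (k+1)‖ + ‖F3 A B k‖ := norm_sub_le _ _
      _ ≤ _ := by
        have : ‖2 * Complex.I * B (k+1)‖ = 2 * ‖B (k+1)‖ := by simp
        rw [this]; linarith
  have h2 : SN A j ≤ ∑ k ∈ range (j+1), (2 * ‖B (k+1)‖ + KF J * (q ^ 2 * (SN A j + SN B j))) := by
    unfold SN
    exact Finset.sum_le_sum fun k hk => h1 k (by simp at hk; omega)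
  rw [Finset.sum_add_distrib, ← Finset.mul_sum] at h2
  have h3 : ∑ k ∈ range (j+1), ‖B (k+1)‖ ≤ SN B (j+1) := by
    unfold SN; rw [Finset.sum_range_succ' _ (j+1)]; simp
  have h4 : SN B j ≤ SN B (j+1) := SN_mono B (by omega)
  simp only [sum_const, card_range, nsmul_eq_mul] at h2
  have h5 : ((j+1 : ℕ) : ℝ) * (KF J * (q ^ 2 * (SN A j + SN B j)))
      ≤ 1 / 2 * (SN A j + SN B j) := by
    have h6 : ((j+1 : ℕ) : ℝ) ≤ J + 1 := by exact_mod_cast (by omega : j + 1 ≤ J + 1)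
    have := SN_nonneg A j
    have := SN_nonneg B j
    have := KF_ge_one J
    calc _ ≤ (J + 1) * (KF J * (q ^ 2 * (SN A j + SN B j))) := by gcongr
      _ = ((J + 1) * KF J * q ^ 2) * (SN A j + SN B j) := by ring
      _ ≤ _ := by gcongr
  linarith

/-- the nonlinear error -/
def NLE (A B : ℕ → ℂ) (j : ℕ) : ℝ :=
  ∑ k ∈ range (j+1), (‖A k‖ * ‖F3 B A k - B 0 * (starRingEnd ℂ) (B 0) * A k‖
    + ‖B k‖ * ‖F3 A B k - A 0 * (starRingEnd ℂ) (A 0) * B k‖)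

lemma NLE_le {A B : ℕ → ℂ} {I J j : ℕ} {q : ℝ} (hq : 0 ≤ q)
    (hA : ∀ i ≤ I, ‖A i‖ ≤ q) (hB : ∀ i ≤ I, ‖B i‖ ≤ q) (hJ : J ≤ 2 * I + 1)
    (hj : j ≤ J) (hsmall : (J + 1) * KF J * q ^ 2 ≤ 1 / 2)
    (hV : ∀ k, B (k+1) = -(Complex.I / 2) * (A k + F3 A B k)) :
    NLE A B j ≤ 7 * KF J * q ^ 2 * (SN A j * SN B j + SN B j ^ 2) := by
  have hK := KF_ge_one J
  have a0 := SN_nonneg A j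
  have b0 := SN_nonneg B j
  have hlow : ∀ k < j, ‖A k‖ ≤ 5 * SN B j := by
    intro k hk
    have h1 := SU_le (j := k) hq hA hB hJ (by omega) hsmall hV
    have h2 := SN_mono B (show k + 1 ≤ j by omega)
    linarith [le_SN A (le_refl k)]
  have h1 : NLE A B j ≤ ∑ k ∈ range (j+1), (‖A k‖ * (KF J * (q ^ 2 * (5 * SN B j)))
      + ‖B k‖ * (KF J * (q ^ 2 * (SN A j + SN B j)))) := by
    refine Finset.sum_le_sum fun k hk => ?_
    have hk' : k ≤ j := by simp at hk; omega
    have e1 : ‖F3 B A k - B 0 * (starRingEnd ℂ) (B 0) * A k‖ ≤ KF J * (q ^ 2 * (5 * SN B j)) := by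
      refine (R_bound (S := 5 * SN B j) hq hB hA (by omega) (by positivity)
        (fun i hi => ?_) (fun i hi => hlow i (by omega))).trans ?_
      · linarith [le_SN B (show i ≤ j by omega)]
      · gcongr; exact cF_le_KF (by omega)
    have e2 : ‖F3 A B k - A 0 * (starRingEnd ℂ) (A 0) * B k‖
        ≤ KF J * (q ^ 2 * (SN A j + SN B j)) := by
      refine (R_bound (S := SN A j + SN B j) hq hA hB (by omega) (by positivity)
        (fun i hi => ?_) (fun i hi => ?_)).trans ?_
      · linarith [le_SN A (show i ≤ j by omega)]
      · linarith [le_SN B (show i ≤ j by omega)]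
      · gcongr; exact cF_le_KF (by omega)
    gcongr
  rw [Finset.sum_add_distrib, ← Finset.sum_mul, ← Finset.sum_mul] at h1
  change NLE A B j ≤ SN A j * _ + SN B j * _ at h1
  refine h1.trans ?_
  have : 0 ≤ KF J * q ^ 2 * (SN A j * SN B j) := by positivity
  have : 0 ≤ KF J * q ^ 2 * (SN B j ^ 2) := by positivity
  nlinarith

end Thir

namespace Thir
open Set

/-- triangle integral -/
def Q (T : ℝ) (G : ℝ → ℝ → ℝ) : ℝ := ∫ r in (1:ℝ)..T, ∫ e in r..T, G r e

lemma cont_inner {G : ℝ → ℝ → ℝ} (hG : Continuous (Function.uncurry G)) (T : ℝ) :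
    Continuous fun r => ∫ e in r..T, G r e := by
  have : (fun r => ∫ e in r..T, G r e) = fun r => - ∫ e in T..r, G r e := by
    ext r; rw [intervalIntegral.integral_symm]
  rw [this]
  exact (intervalIntegral.continuous_parametric_intervalIntegral_of_continuous hG continuous_id).neg

lemma Q_mono {G H : ℝ → ℝ → ℝ} {T : ℝ} (hT : 1 ≤ T) (hG : Continuous (Function.uncurry G))
    (hH : Continuous (Function.uncurry H))
    (h : ∀ r e, 1 ≤ r → r ≤ e → e ≤ T → G r e ≤ H r e) : Q T G ≤ Q T H := by
  unfold Q
  refine intervalIntegral.integral_mono_on hT ((cont_inner hG T).intervalIntegrable _ _)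
    ((cont_inner hH T).intervalIntegrable _ _) fun r hr => ?_
  refine intervalIntegral.integral_mono_on hr.2 ?_ ?_ fun e he => h r e hr.1 he.1 he.2
  · exact (Continuous.intervalIntegrable (by fun_prop) _ _)
  · exact (Continuous.intervalIntegrable (by fun_prop) _ _)

lemma Q_sub {G H : ℝ → ℝ → ℝ} {T : ℝ} (hG : Continuous (Function.uncurry G))
    (hH : Continuous (Function.uncurry H)) :
    Q T (fun r e => G r e - H r e) = Q T G - Q T H := by
  unfold Q
  rw [← intervalIntegral.integral_sub ((cont_inner hG T).intervalIntegrable _ _)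
    ((cont_inner hH T).intervalIntegrable _ _)]
  congr 1
  ext r
  rw [intervalIntegral.integral_sub] <;> exact (Continuous.intervalIntegrable (by fun_prop) _ _)

lemma Q_const_mul (c : ℝ) (G : ℝ → ℝ → ℝ) (T : ℝ) :
    Q T (fun r e => c * G r e) = c * Q T G := by
  unfold Q
  simp [intervalIntegral.integral_const_mul]

lemma Q_swap {G : ℝ → ℝ → ℝ} {T : ℝ} (hT : 1 ≤ T) (hG : Continuous (Function.uncurry G)) :
    Q T G = ∫ e in (1:ℝ)..T, ∫ r in (1:ℝ)..e, G r e := by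
  unfold Q
  have h1 : ∀ r ∈ Ioc 1 T, ∫ e in r..T, G r e
      = ∫ e in Ioc 1 T, (Ioi r).indicator (G r) e := by
    intro r hr
    rw [intervalIntegral.integral_of_le hr.2, integral_indicator measurableSet_Ioi,
      Measure.restrict_restrict measurableSet_Ioi]
    congr 2
    ext e; simp only [mem_Ioc, mem_inter_iff, mem_Ioi]
    constructor
    · intro h; exact ⟨h.1, by linarith [hr.1], h.2⟩
    · intro h; exact ⟨h.1, h.2.2⟩
  have h2 : ∀ e ∈ Ioc 1 T, ∫ r in (1:ℝ)..e, G r e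
      = ∫ r in Ioc 1 T, (Ioi r).indicator (G r) e := by
    intro e he
    rw [intervalIntegral.integral_of_le he.1.le, integral_Ioc_eq_integral_Ioo]
    have : ∀ r, (Ioi r).indicator (G r) e = (Iio e).indicator (fun r => G r e) r := by
      intro r
      by_cases h : r < e <;> simp [indicator, h]
    simp_rw [this]
    rw [integral_indicator measurableSet_Iio, Measure.restrict_restrict measurableSet_Iio]
    congr 2
    ext r; simp only [mem_Ioc, mem_inter_iff, mem_Ioo, mem_Iio]
    constructor
    · intro h; exact ⟨h.2, h.1, by linarith [he.2]⟩
    · intro h; exact ⟨h.2.1, h.1⟩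
  rw [intervalIntegral.integral_of_le hT, intervalIntegral.integral_of_le hT,
    setIntegral_congr_fun measurableSet_Ioc h1, setIntegral_congr_fun measurableSet_Ioc h2]
  refine integral_integral_swap ?_
  have e : Function.uncurry (fun r e => (Ioi r).indicator (G r) e)
      = {p : ℝ × ℝ | p.1 < p.2}.indicator (Function.uncurry G) := by
    ext ⟨r, e⟩; by_cases h : r < e <;> simp [indicator, h]
  rw [e]
  refine Integrable.indicator ?_ (measurableSet_lt measurable_fst measurable_snd)
  rw [Measure.prod_restrict, ← Measure.volume_eq_prod]
  have : IntegrableOn (Function.uncurry G) (Icc 1 T ×ˢ Icc 1 T) :=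
    hG.continuousOn.integrableOn_compact (isCompact_Icc.prod isCompact_Icc)
  exact this.mono_set (prod_mono Ioc_subset_Icc_self Ioc_subset_Icc_self)

lemma tri_identity {A B A' B' : ℝ → ℝ → ℝ} {T : ℝ} (hT : 1 ≤ T)
    (cA : Continuous (Function.uncurry A)) (cB : Continuous (Function.uncurry B))
    (cA' : Continuous (Function.uncurry A')) (cB' : Continuous (Function.uncurry B'))
    (hA : ∀ r e, 1 ≤ r → r < e → HasDerivAt (fun e => A r e) (A' r e) e)
    (hB : ∀ r e, 1 ≤ r → r < e → HasDerivAt (fun r => B r e) (B' r e) r) :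
    (∫ r in (1:ℝ)..T, A r T) + ∫ e in (1:ℝ)..T, B 1 e
      = (∫ s in (1:ℝ)..T, (A s s + B s s)) + Q T (fun r e => A' r e - B' r e) := by
  rw [Q_sub cA' cB', Q_swap hT cB']
  have h1 : Q T A' = ∫ r in (1:ℝ)..T, (A r T - A r r) := by
    unfold Q
    refine intervalIntegral.integral_congr fun r hr => ?_
    rw [uIcc_of_le hT] at hr
    refine intervalIntegral.integral_eq_sub_of_hasDerivAt_of_le hr.2 ?_ ?_ ?_
    · exact Continuous.continuousOn (by fun_prop)
    · exact fun e he => hA r e hr.1 he.1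
    · exact (Continuous.intervalIntegrable (by fun_prop) _ _)
  have h2 : (∫ e in (1:ℝ)..T, ∫ r in (1:ℝ)..e, B' r e) = ∫ e in (1:ℝ)..T, (B e e - B 1 e) := by
    refine intervalIntegral.integral_congr fun e he => ?_
    rw [uIcc_of_le hT] at he
    refine intervalIntegral.integral_eq_sub_of_hasDerivAt_of_le (f := fun r => B r e) he.1 ?_ ?_ ?_
    · exact Continuous.continuousOn (by fun_prop)
    · exact fun r hr => hB r e hr.1.le hr.2
    · exact (Continuous.intervalIntegrable (by fun_prop) _ _)
  rw [h1, h2, intervalIntegral.integral_sub, intervalIntegral.integral_sub,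
    intervalIntegral.integral_add]
  · ring
  all_goals exact (Continuous.intervalIntegrable (by fun_prop) _ _)

end Thir

namespace Thir
open Set

/-- The system in null coordinates, with all r-derivatives. -/
structure Sys (U V : ℕ → ℝ → ℝ → ℂ) : Prop where
  cU : ∀ j, Continuous (Function.uncurry (U j))
  cV : ∀ j, Continuous (Function.uncurry (V j))
  dUr : ∀ j r e, r < e → HasDerivAt (fun r => U j r e) (U (j+1) r e) r
  dVr : ∀ j r e, r < e → HasDerivAt (fun r => V j r e) (V (j+1) r e) r
  dUe : ∀ j r e, r < e → HasDerivAt (fun e => U j r e)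
    (Complex.I / 2 * (V j r e + F3 (fun k => V k r e) (fun k => U k r e) j)) e
  Vs : ∀ j r e, r ≤ e → V (j+1) r e =
    -(Complex.I / 2) * (U j r e + F3 (fun k => U k r e) (fun k => V k r e) j)

/-- energy density -/
def dens (U : ℕ → ℝ → ℝ → ℂ) (j : ℕ) (r e : ℝ) : ℝ := SQ (fun k => U k r e) j

lemma dens_nonneg (U : ℕ → ℝ → ℝ → ℂ) (j : ℕ) (r e : ℝ) : 0 ≤ dens U j r e := SQ_nonneg _ _

lemma dens_cont {U : ℕ → ℝ → ℝ → ℂ} (h : ∀ j, Continuous (Function.uncurry (U j))) (j : ℕ) :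
    Continuous (Function.uncurry (dens U j)) := by
  have : Function.uncurry (dens U j) =
      fun p => ∑ k ∈ Finset.range (j+1), ‖Function.uncurry (U k) p‖ ^ 2 := by
    ext ⟨r, e⟩; simp [dens, SQ]
  rw [this]
  exact continuous_finsetSum _ fun k _ => ((h k).norm.pow 2)

lemma M2_cont {U : ℕ → ℝ → ℝ → ℂ} (hU : ∀ j, Continuous (Function.uncurry (U j))) (j : ℕ) :
    Continuous (fun p : ℝ × ℝ => M2 (fun k => U k p.1 p.2) j) := by
  unfold M2 L2
  refine continuous_finsetSum _ fun p _ => continuous_const.mul ?_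
  exact (hU p.1).mul (Complex.continuous_conj.comp (hU p.2))

lemma F3_cont {U V : ℕ → ℝ → ℝ → ℂ} (hU : ∀ j, Continuous (Function.uncurry (U j)))
    (hV : ∀ j, Continuous (Function.uncurry (V j))) (j : ℕ) :
    Continuous (fun p : ℝ × ℝ => F3 (fun k => U k p.1 p.2) (fun k => V k p.1 p.2) j) := by
  unfold F3
  unfold L2
  exact continuous_finsetSum _ fun p _ => continuous_const.mul ((M2_cont hU p.1).mul (hV p.2))

/-- e-derivative of the density of U -/
def aE (U V : ℕ → ℝ → ℝ → ℂ) (j : ℕ) (r e : ℝ) : ℝ :=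
  ∑ k ∈ Finset.range (j+1), 2 * ((starRingEnd ℂ) (U k r e) *
    (Complex.I / 2 * (V k r e + F3 (fun k => V k r e) (fun k => U k r e) k))).re

/-- r-derivative of the density of V -/
def bR (V : ℕ → ℝ → ℝ → ℂ) (j : ℕ) (r e : ℝ) : ℝ :=
  ∑ k ∈ Finset.range (j+1), 2 * ((starRingEnd ℂ) (V k r e) * V (k+1) r e).re

lemma hasDerivAt_nsq {f : ℝ → ℂ} {f' : ℂ} {x : ℝ} (h : HasDerivAt f f' x) :
    HasDerivAt (fun y => ‖f y‖ ^ 2) (2 * ((starRingEnd ℂ) (f x) * f').re) x := by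
  have := h.norm_sq
  refine this.congr_deriv ?_
  rw [Complex.inner, mul_comm f']

lemma aE_deriv {U V : ℕ → ℝ → ℝ → ℂ} (S : Sys U V) (j : ℕ) {r e : ℝ} (h : r < e) :
    HasDerivAt (fun e => dens U j r e) (aE U V j r e) e := by
  unfold dens SQ aE
  exact HasDerivAt.fun_sum fun k _ => hasDerivAt_nsq (S.dUe k r e h)

lemma bR_deriv {U V : ℕ → ℝ → ℝ → ℂ} (S : Sys U V) (j : ℕ) {r e : ℝ} (h : r < e) :
    HasDerivAt (fun r => dens V j r e) (bR V j r e) r := by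
  unfold dens SQ bR
  exact HasDerivAt.fun_sum fun k _ => hasDerivAt_nsq (S.dVr k r e h)

lemma aE_cont {U V : ℕ → ℝ → ℝ → ℂ} (S : Sys U V) (j : ℕ) :
    Continuous (Function.uncurry (aE U V j)) := by
  have : Function.uncurry (aE U V j) = fun p : ℝ × ℝ => ∑ k ∈ Finset.range (j+1),
    2 * ((starRingEnd ℂ) (U k p.1 p.2) *
    (Complex.I / 2 * (V k p.1 p.2 + F3 (fun k => V k p.1 p.2) (fun k => U k p.1 p.2) k))).re := by
    ext ⟨r, e⟩; rfl
  rw [this]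
  refine continuous_finsetSum _ fun k _ => continuous_const.mul (Complex.continuous_re.comp ?_)
  exact (Complex.continuous_conj.comp (S.cU k)).mul (continuous_const.mul
    ((S.cV k).add (F3_cont S.cV S.cU k)))

lemma bR_cont {U V : ℕ → ℝ → ℝ → ℂ} (S : Sys U V) (j : ℕ) :
    Continuous (Function.uncurry (bR V j)) := by
  have : Function.uncurry (bR V j) = fun p : ℝ × ℝ => ∑ k ∈ Finset.range (j+1),
    2 * ((starRingEnd ℂ) (V k p.1 p.2) * (V (k+1) p.1 p.2)).re := by
    ext ⟨r, e⟩; rfl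
  rw [this]
  refine continuous_finsetSum _ fun k _ => continuous_const.mul (Complex.continuous_re.comp ?_)
  exact (Complex.continuous_conj.comp (S.cV k)).mul (S.cV (k+1))

lemma alg_re (u v R R' z w : ℂ) :
    2 * ((starRingEnd ℂ) u * (Complex.I / 2 * (v + (z * (starRingEnd ℂ) z * u + R)))).re
    - 2 * ((starRingEnd ℂ) v * (-(Complex.I / 2) * (u + (w * (starRingEnd ℂ) w * v + R')))).re
    = ((starRingEnd ℂ) u * (Complex.I * R)).re + ((starRingEnd ℂ) v * (Complex.I * R')).re := by
  simp [Complex.mul_re, Complex.mul_im]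
  ring

lemma re_le_nn (u R : ℂ) : ((starRingEnd ℂ) u * (Complex.I * R)).re ≤ ‖u‖ * ‖R‖ := by
  refine (Complex.re_le_norm _).trans ?_
  simp

lemma flux_le {U V : ℕ → ℝ → ℝ → ℂ} (S : Sys U V) (j : ℕ) {r e : ℝ} (h : r ≤ e) :
    aE U V j r e - bR V j r e ≤ NLE (fun k => U k r e) (fun k => V k r e) j := by
  unfold aE bR NLE
  rw [← Finset.sum_sub_distrib]
  refine Finset.sum_le_sum fun k _ => ?_
  rw [S.Vs k r e h]
  set FU := F3 (fun k => V k r e) (fun k => U k r e) k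
  set FV := F3 (fun k => U k r e) (fun k => V k r e) k
  have := alg_re (U k r e) (V k r e) (FU - V 0 r e * (starRingEnd ℂ) (V 0 r e) * U k r e)
    (FV - U 0 r e * (starRingEnd ℂ) (U 0 r e) * V k r e) (V 0 r e) (U 0 r e)
  rw [add_sub_cancel, add_sub_cancel] at this
  rw [this]
  exact add_le_add (re_le_nn _ _) (re_le_nn _ _)

/-- the bootstrap assumption -/
def Good (U V : ℕ → ℝ → ℝ → ℂ) (I : ℕ) (κ T : ℝ) : Prop :=
  ∀ r e, 1 ≤ r → r ≤ e → e ≤ T → ∀ i ≤ I,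
    ‖U i r e‖ ^ 2 * (r * e) ≤ κ ∧ ‖V i r e‖ ^ 2 * (r * e) ≤ κ

lemma Good.q {U V : ℕ → ℝ → ℝ → ℂ} {I : ℕ} {κ T : ℝ} (G : Good U V I κ T) {r e : ℝ}
    (h1 : 1 ≤ r) (h2 : r ≤ e) (h3 : e ≤ T) (hκ : 0 ≤ κ) :
    ∃ q : ℝ, 0 ≤ q ∧ q ^ 2 = κ / (r * e) ∧ (∀ i ≤ I, ‖U i r e‖ ≤ q) ∧ (∀ i ≤ I, ‖V i r e‖ ≤ q) := by
  have hre : 0 < r * e := by nlinarith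
  refine ⟨√(κ / (r * e)), Real.sqrt_nonneg _, Real.sq_sqrt (by positivity), fun i hi => ?_,
    fun i hi => ?_⟩
  · apply Real.le_sqrt_of_sq_le
    rw [le_div_iff₀ hre]; exact (G r e h1 h2 h3 i hi).1
  · apply Real.le_sqrt_of_sq_le
    rw [le_div_iff₀ hre]; exact (G r e h1 h2 h3 i hi).2

lemma NL_final {U V : ℕ → ℝ → ℝ → ℂ} (S : Sys U V) {I J j : ℕ} {κ T : ℝ} (hκ : 0 ≤ κ)
    (hJ : J ≤ 2 * I + 1) (hj : j ≤ J) (hs : 28 * (J + 1) * KF J * κ ≤ 1) (G : Good U V I κ T)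
    {r e : ℝ} (h1 : 1 ≤ r) (h2 : r ≤ e) (h3 : e ≤ T) :
    NLE (fun k => U k r e) (fun k => V k r e) j ≤
      dens U j r e / (1 + e ^ 2) + dens V j r e / (2 * r) := by
  obtain ⟨q, hq, hq2, hA, hB⟩ := G.q h1 h2 h3 hκ
  have hre1 : 1 ≤ r * e := by nlinarith
  have hK := KF_ge_one J
  have hsm : (J + 1) * KF J * q ^ 2 ≤ 1 / 2 := by
    have : q ^ 2 ≤ κ := by rw [hq2]; exact div_le_self hκ hre1
    have : (J + 1) * KF J * q ^ 2 ≤ (J + 1) * KF J * κ := by gcongr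
    nlinarith
  refine (NLE_le hq hA hB hJ hj hsm (fun k => S.Vs k r e h2)).trans ?_
  have hA2 := SN_sq_le (fun k => U k r e) j
  have hB2 := SN_sq_le (fun k => V k r e) j
  have hA0 := SN_nonneg (fun k => U k r e) j
  have hB0 := SN_nonneg (fun k => V k r e) j
  change _ ≤ _ * dens U j r e at hA2
  change _ ≤ _ * dens V j r e at hB2
  have a0 := dens_nonneg U j r e
  have b0 := dens_nonneg V j r e
  set X := SN (fun k => U k r e) j
  set Y := SN (fun k => V k r e) j
  set a := dens U j r e
  set b := dens V j r e
  rw [hq2]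
  have hr : 0 < r := by linarith
  have he : 0 < e := by linarith
  have he1 : 1 ≤ e := by linarith
  have hjJ : (j : ℝ) + 1 ≤ J + 1 := by gcongr
  have k1 : X * Y / (r * e) ≤ 1 / 2 * (X ^ 2 / e ^ 2 + Y ^ 2 / r ^ 2) := by
    have : X * Y / (r * e) = (X / e) * (Y / r) := by field_simp
    rw [this, ← div_pow, ← div_pow]
    nlinarith [sq_nonneg (X / e - Y / r)]
  have k2 : X ^ 2 / e ^ 2 ≤ (J + 1) * (2 * (a / (1 + e ^ 2))) := by
    have : X ^ 2 ≤ (J + 1) * a := hA2.trans (by gcongr)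
    have h5 : a / e ^ 2 ≤ 2 * (a / (1 + e ^ 2)) := by
      rw [← mul_div_assoc, div_le_div_iff₀ (by positivity) (by positivity)]
      nlinarith [mul_nonneg a0 (show 0 ≤ e ^ 2 - 1 by nlinarith)]
    calc X ^ 2 / e ^ 2 ≤ (J + 1) * a / e ^ 2 := by gcongr
      _ = (J + 1) * (a / e ^ 2) := by ring
      _ ≤ _ := by gcongr
  have hY : Y ^ 2 ≤ (J + 1) * b := hB2.trans (by gcongr)
  have k3 : Y ^ 2 / r ^ 2 ≤ (J + 1) * (b / r) := by
    calc Y ^ 2 / r ^ 2 ≤ (J + 1) * b / r ^ 2 := by gcongr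
      _ ≤ (J + 1) * b / r := by
        gcongr
        nlinarith
      _ = _ := by ring
  have k4 : Y ^ 2 / (r * e) ≤ (J + 1) * (b / r) := by
    calc Y ^ 2 / (r * e) ≤ (J + 1) * b / (r * e) := by gcongr
      _ ≤ (J + 1) * b / r := by
        gcongr
        nlinarith
      _ = _ := by ring
  have e1 : 7 * KF J * (κ / (r * e)) * (X * Y + Y ^ 2)
      = 7 * KF J * κ * (X * Y / (r * e) + Y ^ 2 / (r * e)) := by ring
  rw [e1]
  have k5 : X * Y / (r * e) + Y ^ 2 / (r * e) ≤
      (J + 1) * (a / (1 + e ^ 2) + 3 / 2 * (b / r)) := by linarith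
  have p1 : 0 ≤ a / (1 + e ^ 2) := by positivity
  have p2 : 0 ≤ b / r := by positivity
  calc _ ≤ 7 * KF J * κ * ((J + 1) * (a / (1 + e ^ 2) + 3 / 2 * (b / r))) := by gcongr
    _ = (28 * (J + 1) * KF J * κ) * (1 / 4 * (a / (1 + e ^ 2) + 3 / 2 * (b / r))) := by ring
    _ ≤ 1 * (1 / 4 * (a / (1 + e ^ 2) + 3 / 2 * (b / r))) := by gcongr
    _ ≤ _ := by
      have : b / (2 * r) = 1 / 2 * (b / r) := by field_simp
      rw [this]; linarith

lemma dens_le_next {U V : ℕ → ℝ → ℝ → ℂ} (S : Sys U V) {I J j : ℕ} {κ T : ℝ} (hκ : 0 ≤ κ)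
    (hJ : J ≤ 2 * I + 1) (hj : j < J) (hs : 28 * (J + 1) * KF J * κ ≤ 1) (G : Good U V I κ T)
    {r e : ℝ} (h1 : 1 ≤ r) (h2 : r ≤ e) (h3 : e ≤ T) :
    dens U j r e ≤ 25 * (J + 1) * dens V (j+1) r e := by
  obtain ⟨q, hq, hq2, hA, hB⟩ := G.q h1 h2 h3 hκ
  have hre1 : 1 ≤ r * e := by nlinarith
  have hK := KF_ge_one J
  have hsm : (J + 1) * KF J * q ^ 2 ≤ 1 / 2 := by
    have : q ^ 2 ≤ κ := by rw [hq2]; exact div_le_self hκ hre1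
    have : (J + 1) * KF J * q ^ 2 ≤ (J + 1) * KF J * κ := by gcongr
    nlinarith
  have h := SU_le hq hA hB hJ hj hsm (fun k => S.Vs k r e h2)
  have hA0 := SN_nonneg (fun k => U k r e) j
  have hB2 := SN_sq_le (fun k => V k r e) (j+1)
  have hA2 := SQ_le_SN_sq (fun k => U k r e) j
  have b0 := dens_nonneg V (j+1) r e
  change dens U j r e ≤ _ at hA2
  change _ ≤ _ * dens V (j+1) r e at hB2
  have hjJ : ((j + 1 : ℕ) : ℝ) + 1 ≤ J + 1 := by gcongr; omega
  calc dens U j r e ≤ SN (fun k => U k r e) j ^ 2 := hA2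
    _ ≤ (5 * SN (fun k => V k r e) (j+1)) ^ 2 := by gcongr
    _ = 25 * SN (fun k => V k r e) (j+1) ^ 2 := by ring
    _ ≤ 25 * ((((j + 1 : ℕ) : ℝ) + 1) * dens V (j+1) r e) := by gcongr
    _ ≤ 25 * ((J + 1) * dens V (j+1) r e) := by gcongr
    _ = _ := by ring

/-- weight -/
def th (e : ℝ) : ℝ := Real.exp (-Real.arctan e)
lemma th_pos (e : ℝ) : 0 < th e := Real.exp_pos _
lemma th_le {e : ℝ} (h : 0 ≤ e) : th e ≤ 1 := by
  unfold th; rw [Real.exp_le_one_iff]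
  have := Real.arctan_nonneg.2 h; linarith
/-- lower bound of the weight -/
def c0 : ℝ := Real.exp (-(Real.pi / 2))
lemma c0_pos : 0 < c0 := Real.exp_pos _
lemma c0_le (e : ℝ) : c0 ≤ th e := by
  unfold th c0; rw [Real.exp_le_exp]; linarith [Real.arctan_lt_pi_div_two e]
lemma th_cont : Continuous th := by unfold th; fun_prop
lemma th_deriv (e : ℝ) : HasDerivAt th (-(th e / (1 + e ^ 2))) e := by
  unfold th
  have := (Real.hasDerivAt_arctan e).neg.exp
  refine this.congr_deriv ?_
  simp only [Pi.neg_apply]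
  ring

lemma energy {U V : ℕ → ℝ → ℝ → ℂ} (S : Sys U V) {I J j m p : ℕ} {κ T : ℝ} (hκ : 0 ≤ κ)
    (hJ : J ≤ 2 * I + 1) (hj : j ≤ J) (hs : 28 * (J + 1) * KF J * κ ≤ 1) (G : Good U V I κ T)
    (hT : 1 ≤ T) :
    c0 * (∫ r in (1:ℝ)..T, r ^ (p+1) * T ^ m * dens U j r T)
      + c0 / 2 * Q T (fun r e => r ^ p * e ^ m * dens V j r e)
    ≤ (∫ s in (1:ℝ)..T, s ^ (p+1+m) * (dens U j s s + dens V j s s))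
      + m * Q T (fun r e => r ^ (p+1) * e ^ (m-1) * dens U j r e) := by
  have ca := dens_cont S.cU j
  have cb := dens_cont S.cV j
  have caE := aE_cont S j
  have cbR := bR_cont S j
  have cth := th_cont
  have key := tri_identity (T := T) hT
    (A := fun r e => r ^ (p+1) * (e ^ m * th e * dens U j r e))
    (B := fun r e => r ^ (p+1) * dens V j r e * (e ^ m * th e))
    (A' := fun r e => r ^ (p+1) * ((m * e ^ (m-1) * th e + e ^ m * -(th e / (1 + e ^ 2)))
      * dens U j r e + e ^ m * th e * aE U V j r e))
    (B' := fun r e => (((p+1 : ℕ) : ℝ) * r ^ p * dens V j r e + r ^ (p+1) * bR V j r e)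
      * (e ^ m * th e))
    (by fun_prop) (by fun_prop)
    (by
      have : ∀ x : ℝ × ℝ, (1 + x.2 ^ 2) ≠ 0 := fun x => by positivity
      unfold Function.uncurry
      fun_prop (disch := exact this _)) 
    (by fun_prop)
    (by
      intro r e h1 h2
      exact (((hasDerivAt_pow m e).mul (th_deriv e)).mul (aE_deriv S j h2)).const_mul _)
    (by
      intro r e h1 h2
      exact ((hasDerivAt_pow (p+1) r).mul (bR_deriv S j h2)).mul_const _)
  have hQ : Q T (fun r e => r ^ (p+1) * ((m * e ^ (m-1) * th e + e ^ m * -(th e / (1 + e ^ 2)))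
      * dens U j r e + e ^ m * th e * aE U V j r e) -
      (((p+1 : ℕ) : ℝ) * r ^ p * dens V j r e + r ^ (p+1) * bR V j r e) * (e ^ m * th e))
      ≤ Q T (fun r e => m * (r ^ (p+1) * e ^ (m-1) * dens U j r e)
        - c0 / 2 * (r ^ p * e ^ m * dens V j r e)) := by
    refine Q_mono hT ?_ (by fun_prop) ?_
    · have : ∀ x : ℝ × ℝ, (1 + x.2 ^ 2) ≠ 0 := fun x => by positivity
      unfold Function.uncurry
      fun_prop (disch := exact this _)
    · intro r e h1 h2 h3
      have f1 := flux_le S j h2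
      have f2 := NL_final S hκ hJ hj hs G h1 h2 h3
      have a0 := dens_nonneg U j r e
      have b0 := dens_nonneg V j r e
      set a := dens U j r e
      set b := dens V j r e
      have hr : 0 < r := by linarith
      have he : 0 < e := by linarith
      have t0 := th_pos e
      have t1 := th_le he.le
      have tc := c0_le e
      have f3 := f1.trans f2
      have g1 : r ^ (p+1) * e ^ m * th e * (aE U V j r e - bR V j r e) ≤
        r ^ (p+1) * e ^ m * th e * (a / (1 + e ^ 2) + b / (2 * r)) := by gcongr
      have g2 : r ^ (p+1) * e ^ m * th e * (b / (2 * r)) = 1 / 2 * (r ^ p * e ^ m * b) * th e := by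
        field_simp
        ring
      have g3 : m * (r ^ (p+1) * e ^ (m-1) * a) * th e ≤ m * (r ^ (p+1) * e ^ (m-1) * a) * 1 := by
        gcongr
      have g4 : (r ^ p * e ^ m * b) * c0 ≤ (r ^ p * e ^ m * b) * th e := by gcongr
      have g5 : 0 ≤ (p : ℝ) * (r ^ p * e ^ m * b) * th e := by positivity
      push_cast
      rw [mul_add, g2] at g1
      have g6 : r ^ (p + 1) * ((↑m * e ^ (m - 1) * th e + e ^ m * -(th e / (1 + e ^ 2))) * a
          + e ^ m * th e * aE U V j r e) -
          (((p : ℝ) + 1) * r ^ p * b + r ^ (p + 1) * bR V j r e) * (e ^ m * th e)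
          = r ^ (p+1) * e ^ m * th e * (aE U V j r e - bR V j r e)
          + m * (r ^ (p+1) * e ^ (m-1) * a) * th e
          - r ^ (p+1) * e ^ m * th e * (a / (1 + e ^ 2))
          - (p : ℝ) * (r ^ p * e ^ m * b) * th e - (r ^ p * e ^ m * b) * th e := by ring
      rw [g6]
      linarith
  rw [Q_sub (G := fun r e => m * (r ^ (p+1) * e ^ (m-1) * dens U j r e))
    (H := fun r e => c0 / 2 * (r ^ p * e ^ m * dens V j r e))
    (by fun_prop) (by fun_prop), Q_const_mul, Q_const_mul] at hQ
  have hL : c0 * (∫ r in (1:ℝ)..T, r ^ (p+1) * T ^ m * dens U j r T)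
      ≤ ∫ r in (1:ℝ)..T, r ^ (p+1) * (T ^ m * th T * dens U j r T) := by
    rw [← intervalIntegral.integral_const_mul]
    refine intervalIntegral.integral_mono_on hT ?_ ?_ fun r hr => ?_
    · exact (Continuous.intervalIntegrable (by fun_prop) _ _)
    · exact (Continuous.intervalIntegrable (by fun_prop) _ _)
    · have a0 := dens_nonneg U j r T
      have hr0 : 0 ≤ r := by linarith [hr.1]
      have : 0 ≤ r ^ (p+1) * T ^ m * dens U j r T := by positivity
      nlinarith [c0_le T]
  have hB : 0 ≤ ∫ e in (1:ℝ)..T, (1:ℝ) ^ (p+1) * dens V j 1 e * (e ^ m * th e) := by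
    refine intervalIntegral.integral_nonneg hT fun e he => ?_
    have := dens_nonneg V j 1 e
    have := th_pos e
    have : 0 ≤ e := by linarith [he.1]
    positivity
  have hD : (∫ s in (1:ℝ)..T, (s ^ (p+1) * (s ^ m * th s * dens U j s s)
      + s ^ (p+1) * dens V j s s * (s ^ m * th s)))
      ≤ ∫ s in (1:ℝ)..T, s ^ (p+1+m) * (dens U j s s + dens V j s s) := by
    refine intervalIntegral.integral_mono_on hT ?_ ?_ fun s hs => ?_
    · exact (Continuous.intervalIntegrable (by fun_prop) _ _)
    · exact (Continuous.intervalIntegrable (by fun_prop) _ _)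
    · have a0 := dens_nonneg U j s s
      have b0 := dens_nonneg V j s s
      have hs0 : 0 ≤ s := by linarith [hs.1]
      have : 0 ≤ s ^ (p+1+m) * (dens U j s s + dens V j s s) := by positivity
      have t1 := th_le hs0
      calc _ = s ^ (p+1+m) * (dens U j s s + dens V j s s) * th s := by ring
        _ ≤ _ := mul_le_of_le_one_right this t1
  linarith

end Thir

namespace Thir
open Set Filter Topology

/-- decay of the data on the diagonal -/
def Data (U V : ℕ → ℝ → ℝ → ℂ) (N : ℕ) (D : ℝ) : Prop :=
  ∀ s, 1 ≤ s → ∀ i ≤ N + 3, ‖U i s s‖ ^ 2 * s ^ (N + 6) ≤ D ^ 2 ∧ ‖V i s s‖ ^ 2 * s ^ (N + 6) ≤ D ^ 2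

lemma int_inv_sq {a T : ℝ} (ha : 1 ≤ a) (hT : a ≤ T) :
    IntervalIntegrable (fun s : ℝ => 1 / s ^ 2) volume a T ∧ ∫ s in a..T, 1 / s ^ 2 ≤ 1 / a := by
  have hc : ContinuousOn (fun s : ℝ => 1 / s ^ 2) (uIcc a T) := by
    rw [uIcc_of_le hT]
    intro x hx
    have : x ^ 2 ≠ 0 := by have := hx.1; have : 0 < x := by linarith
                           positivity
    exact (ContinuousAt.div continuousAt_const (continuousAt_id.pow 2) this).continuousWithinAt
  have hi := hc.intervalIntegrable (μ := volume)
  refine ⟨hi, ?_⟩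
  rw [intervalIntegral.integral_eq_sub_of_hasDerivAt (f := fun s => -(1 / s)) ?_ hi]
  · have hT0 : 0 ≤ T := by linarith
    have : 0 ≤ 1 / T := by positivity
    linarith
  · intro x hx
    rw [uIcc_of_le hT] at hx
    have h0 : x ≠ 0 := by have := hx.1; intro h; linarith
    have := (hasDerivAt_inv h0).neg
    refine (this.congr_deriv ?_).congr_of_eventuallyEq ?_
    · field_simp
    · exact Eventually.of_forall fun y => by simp

lemma data_dens {U : ℕ → ℝ → ℝ → ℂ} {n p : ℕ} {D s : ℝ} (hs : 1 ≤ s)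
    (h : ∀ i ≤ p, ‖U i s s‖ ^ 2 * s ^ (n + 6) ≤ D ^ 2) :
    s ^ (n + 4) * dens U p s s ≤ (p + 1) * D ^ 2 * (1 / s ^ 2) := by
  have : s ^ (n+6) * dens U p s s ≤ (p+1) * D ^ 2 := by
    unfold dens SQ
    rw [Finset.mul_sum]
    refine (Finset.sum_le_card_nsmul _ _ (D ^ 2) fun i hi => ?_).trans (by simp)
    rw [mul_comm]; exact h i (by simp at hi; omega)
  have h2 : 0 < s ^ 2 := by positivity
  rw [mul_one_div, le_div_iff₀ h2]
  calc _ = s ^ (n+6) * dens U p s s := by ring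
    _ ≤ _ := this

lemma data_int {U V : ℕ → ℝ → ℝ → ℂ} (S : Sys U V) {N p : ℕ} {D T : ℝ} (hT : 1 ≤ T)
    (h : Data U V N D) (hp : p ≤ N + 3) :
    (∫ s in (1:ℝ)..T, s ^ (N+4) * (dens U p s s + dens V p s s)) ≤ 2 * (p + 1) * D ^ 2 := by
  obtain ⟨hi, hb⟩ := int_inv_sq le_rfl hT
  have c1 : Continuous fun s => dens U p s s := (dens_cont S.cU p).comp (continuous_id.prodMk continuous_id)
  have c2 : Continuous fun s => dens V p s s := (dens_cont S.cV p).comp (continuous_id.prodMk continuous_id)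
  calc _ ≤ ∫ s in (1:ℝ)..T, (2 * (p + 1) * D ^ 2) * (1 / s ^ 2) := by
        refine intervalIntegral.integral_mono_on hT ?_ (hi.const_mul _) ?_
        · exact ((continuous_id.pow _).mul (c1.add c2)).intervalIntegrable _ _
        · intro s hs
          have a1 := data_dens (U := U) (n := N) (p := p) (D := D) hs.1 fun i hi => (h s hs.1 i (by omega)).1
          have a2 := data_dens (U := V) (n := N) (p := p) (D := D) hs.1 fun i hi => (h s hs.1 i (by omega)).2
          linarith
    _ ≤ _ := by
        rw [intervalIntegral.integral_const_mul]
        refine (mul_le_mul_of_nonneg_left hb (by positivity)).trans (by simp)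

lemma wcont {G : ℝ → ℝ → ℝ} (h : Continuous (Function.uncurry G)) (a b : ℕ) :
    Continuous (Function.uncurry (fun r e => r ^ a * e ^ b * G r e)) :=
  (((continuous_fst.pow a).mul (continuous_snd.pow b)).mul h)

lemma Q_nonneg {G : ℝ → ℝ → ℝ} {T : ℝ} (hT : 1 ≤ T) 
    (h : ∀ r e, 1 ≤ r → r ≤ e → e ≤ T → 0 ≤ G r e) : 0 ≤ Q T G :=
  intervalIntegral.integral_nonneg hT fun r hr =>
    intervalIntegral.integral_nonneg hr.2 fun e he => h r e hr.1 he.1 he.2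

/-- standing smallness hypothesis -/
def Small (N : ℕ) (κ : ℝ) : Prop := 0 ≤ κ ∧ 28 * (((N+3:ℕ):ℝ) + 1) * KF (N+3) * κ ≤ 1

lemma levels (N m : ℕ) : ∀ p, m + p = N + 3 → ∃ C : ℝ, 0 ≤ C ∧
    ∀ (U V : ℕ → ℝ → ℝ → ℂ) (κ T D : ℝ), Sys U V → Small N κ → Good U V (N+1) κ T → 1 ≤ T →
      Data U V N D →
      (∫ r in (1:ℝ)..T, r ^ (p+1) * T ^ m * dens U p r T) ≤ C * D ^ 2 ∧
      Q T (fun r e => r ^ p * e ^ m * dens V p r e) ≤ C * D ^ 2 := by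
  have c0p := c0_pos
  have fin : ∀ A B X : ℝ, 0 ≤ A → 0 ≤ B → c0 * A + c0 / 2 * B ≤ X →
      A ≤ 2 / c0 * X ∧ B ≤ 2 / c0 * X := by
    intro A B X hA hB h
    have e1 : 2 / c0 * X = 2 * X / c0 := by ring
    rw [e1, le_div_iff₀ c0p, le_div_iff₀ c0p]
    constructor <;> nlinarith
  induction m with
  | zero =>
    intro p hp
    refine ⟨2 / c0 * (2 * (p+1)), by positivity, ?_⟩
    intro U V κ T D S hκ G hT hD
    have E := energy S (I := N+1) (J := N+3) (j := p) (m := 0) (p := p) hκ.1 (by omega) (by omega)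
      hκ.2 G hT
    have hd := data_int S hT hD (p := p) (by omega)
    obtain rfl : p = N + 3 := by omega
    have := fin _ _ (2 * (((N+3:ℕ):ℝ)+1) * D ^ 2) (intervalIntegral.integral_nonneg hT fun r hr => by
      have := hr.1; have := dens_nonneg U (N+3) r T; positivity) (Q_nonneg hT fun r e h1 h2 h3 => by
      have := dens_nonneg V (N+3) r e; positivity) (E.trans (by simpa using hd))
    constructor
    · refine this.1.trans (le_of_eq (by ring))
    · refine this.2.trans (le_of_eq (by ring))
  | succ m ih =>
    intro p hp
    obtain ⟨C, hC, H⟩ := ih (p+1) (by omega)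
    refine ⟨2 / c0 * (2 * (p+1) + (m+1) * (25 * (((N+3:ℕ):ℝ)+1) * C)), by positivity, ?_⟩
    intro U V κ T D S hκ G hT hD
    have E := energy S (I := N+1) (J := N+3) (j := p) (m := m+1) (p := p) hκ.1 (by omega) (by omega)
      hκ.2 G hT
    have hd := data_int S hT hD (p := p) (by omega)
    have hq := (H U V κ T D S hκ G hT hD).2
    rw [show p + 1 + (m+1) = N + 4 by omega] at E
    have hQ : Q T (fun r e => r ^ (p+1) * e ^ m * dens U p r e) ≤
        25 * (((N+3:ℕ):ℝ)+1) * (C * D ^ 2) := by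
      refine le_trans ?_ (mul_le_mul_of_nonneg_left hq (by positivity))
      rw [← Q_const_mul]
      refine Q_mono hT (wcont (dens_cont S.cU p) _ _)
        (continuous_const.mul (wcont (dens_cont S.cV (p+1)) _ _)) fun r e h1 h2 h3 => ?_
      have := dens_le_next S (I := N+1) (J := N+3) (j := p) hκ.1 (by omega) (by omega) hκ.2 G h1 h2 h3
      have h0 : 0 ≤ r ^ (p+1) * e ^ m := by have : 0 ≤ e := by linarith
                                            positivity
      calc _ ≤ r ^ (p+1) * e ^ m * (25 * (((N+3:ℕ):ℝ)+1) * dens V (p+1) r e) :=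
            mul_le_mul_of_nonneg_left this h0
        _ = _ := by ring
    have E2 : c0 * (∫ r in (1:ℝ)..T, r ^ (p+1) * T ^ (m+1) * dens U p r T)
      + c0 / 2 * Q T (fun r e => r ^ p * e ^ (m+1) * dens V p r e) ≤
        2 * (p+1) * D ^ 2 + (m+1) * (25 * (((N+3:ℕ):ℝ)+1) * (C * D ^ 2)) := by
      refine E.trans (add_le_add hd ?_)
      push_cast
      refine mul_le_mul_of_nonneg_left ?_ (by positivity)
      simpa using hQ
    have := fin _ _ _ (intervalIntegral.integral_nonneg hT fun r hr => by
      have := hr.1; have := dens_nonneg U p r T; positivity) (Q_nonneg hT fun r e h1 h2 h3 => by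
      have := dens_nonneg V p r e; have : 0 ≤ e := by linarith
      positivity) E2
    constructor
    · refine this.1.trans (le_of_eq (by ring))
    · refine this.2.trans (le_of_eq (by ring))

end Thir

namespace Thir
open Set Filter Topology

lemma F3_bound2 {A B : ℕ → ℂ} {j : ℕ} {S : ℝ} (hS : 0 ≤ S)
    (hA : ∀ i ≤ j, ‖A i‖ ≤ 1) (hB : ∀ i ≤ j, ‖B i‖ ≤ 1)
    (hSA : ∀ k ≤ j, ‖A k‖ ≤ S) :
    ‖F3 A B j‖ ≤ cF j * S := by
  unfold F3 L2 cF
  rw [Finset.sum_mul]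
  refine norm_sum_le_of_le _ fun p hp => ?_
  rw [Finset.HasAntidiagonal.mem_antidiagonal] at hp
  rw [norm_mul, norm_mul, Complex.norm_natCast, mul_assoc]
  refine mul_le_mul_of_nonneg_left ?_ (Nat.cast_nonneg _)
  unfold M2 L2
  refine (mul_le_mul_of_nonneg_right (norm_sum_le _ _) (norm_nonneg _)).trans ?_
  rw [Finset.sum_mul, Finset.sum_mul]
  refine Finset.sum_le_sum fun r hr => ?_
  rw [Finset.HasAntidiagonal.mem_antidiagonal] at hr
  rw [norm_mul, norm_mul, Complex.norm_natCast, RCLike.norm_conj, mul_assoc]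
  refine mul_le_mul_of_nonneg_left ?_ (Nat.cast_nonneg _)
  calc ‖A r.1‖ * ‖A r.2‖ * ‖B p.2‖ ≤ S * 1 * 1 := by
        gcongr
        · exact hSA _ (by omega)
        · exact hA _ (by omega)
        · exact hB _ (by omega)
    _ = S := by ring

lemma cont_line {U : ℝ → ℝ → ℂ} (h : Continuous (Function.uncurry U)) (T : ℝ) :
    Continuous fun r => U r T := h.comp (continuous_id.prodMk continuous_const)

lemma pt_U {U V : ℕ → ℝ → ℝ → ℂ} (S : Sys U V) {N m p i : ℕ} {D T C r : ℝ} (hmp : m + p = N + 3)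
    (hD : Data U V N D) (hE : (∫ r in (1:ℝ)..T, r ^ (p+1) * T ^ m * dens U p r T) ≤ C * D ^ 2)
    (hr : 1 ≤ r) (hrT : r ≤ T) (hi : i < p) :
    ‖U i r T‖ ^ 2 * (T ^ m * r ^ (p+1)) ≤ (C + 1) * D ^ 2 := by
  have hT : 1 ≤ T := hr.trans hrT
  have cU := fun k => cont_line (S.cU k) T
  have cd : Continuous fun s => dens U p s T :=
    (dens_cont S.cU p).comp (continuous_id.prodMk continuous_const)
  have ci : Continuous fun s => 2 * ((starRingEnd ℂ) (U i s T) * U (i+1) s T).re :=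
    continuous_const.mul (Complex.continuous_re.comp
      ((Complex.continuous_conj.comp (cU i)).mul (cU (i+1))))
  have ftc := intervalIntegral.integral_eq_sub_of_hasDerivAt_of_le hrT
    (f := fun s => ‖U i s T‖ ^ 2) ((cU i).norm.pow 2).continuousOn
    (fun s hs => hasDerivAt_nsq (S.dUr i s T hs.2)) (ci.intervalIntegrable _ _)
  have lb : -(∫ s in r..T, dens U p s T) ≤ ∫ s in r..T, 2 * ((starRingEnd ℂ) (U i s T) * U (i+1) s T).re := by
    rw [← intervalIntegral.integral_neg]
    refine intervalIntegral.integral_mono_on hrT (cd.neg.intervalIntegrable _ _)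
      (ci.intervalIntegrable _ _) fun s hs => ?_
    have h1 : |((starRingEnd ℂ) (U i s T) * U (i+1) s T).re| ≤ ‖U i s T‖ * ‖U (i+1) s T‖ := by
      refine (Complex.abs_re_le_norm _).trans ?_
      simp
    have h2 : ‖U i s T‖ ^ 2 + ‖U (i+1) s T‖ ^ 2 ≤ dens U p s T := by
      unfold dens SQ
      have hsub : ({i, i+1} : Finset ℕ) ⊆ Finset.range (p+1) := by
        intro x hx; simp at hx ⊢; omega
      have := Finset.sum_le_sum_of_subset_of_nonneg (f := fun k => ‖U k s T‖ ^ 2) hsub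
        (fun _ _ _ => by positivity)
      rwa [Finset.sum_pair (by omega)] at this
    have h3 := neg_abs_le (((starRingEnd ℂ) (U i s T) * U (i+1) s T).re)
    nlinarith [sq_nonneg (‖U i s T‖ - ‖U (i+1) s T‖)]
  have hb : ‖U i r T‖ ^ 2 ≤ ‖U i T T‖ ^ 2 + ∫ s in r..T, dens U p s T := by linarith
  have hw : 0 ≤ T ^ m * r ^ (p+1) := by positivity
  have hdat : ‖U i T T‖ ^ 2 * (T ^ m * r ^ (p+1)) ≤ D ^ 2 := by
    refine le_trans ?_ (hD T hT i (by omega)).1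
    refine mul_le_mul_of_nonneg_left ?_ (by positivity)
    calc T ^ m * r ^ (p+1) ≤ T ^ m * T ^ (p+1) := by gcongr
      _ = T ^ (N+4) := by rw [← pow_add]; congr 1; omega
      _ ≤ T ^ (N+6) := pow_le_pow_right₀ hT (by omega)
  have hintg : (∫ s in r..T, dens U p s T) * (T ^ m * r ^ (p+1)) ≤ C * D ^ 2 := by
    have cw : Continuous fun s => s ^ (p+1) * T ^ m * dens U p s T :=
      ((continuous_id.pow _).mul continuous_const).mul cd
    refine le_trans ?_ hE
    rw [← intervalIntegral.integral_mul_const]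
    calc _ ≤ ∫ s in r..T, s ^ (p+1) * T ^ m * dens U p s T := by
          refine intervalIntegral.integral_mono_on hrT ((cd.mul continuous_const).intervalIntegrable _ _)
            (cw.intervalIntegrable _ _) fun s hs => ?_
          have := dens_nonneg U p s T
          calc _ = r ^ (p+1) * T ^ m * dens U p s T := by ring
            _ ≤ _ := by
              have := hs.1
              gcongr
      _ ≤ _ := by
          refine intervalIntegral.integral_mono_interval hr hrT le_rfl ?_ (cw.intervalIntegrable _ _)
          refine (ae_restrict_iff' measurableSet_Ioc).2 (Eventually.of_forall fun s hs => ?_)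
          have := dens_nonneg U p s T
          have := hs.1
          simp only [Pi.zero_apply]
          have : 0 ≤ s := by linarith
          positivity
  nlinarith [mul_le_mul_of_nonneg_right hb hw]

lemma pt_V {U V : ℕ → ℝ → ℝ → ℂ} (S : Sys U V) {N m i : ℕ} {D T A κ r : ℝ} (hm : m ≤ N + 3)
    (hD : Data U V N D) (hD0 : 0 ≤ D) (hA0 : 0 ≤ A) (hκ : 0 ≤ κ) (hκ1 : κ ≤ 1)
    (G : Good U V (N+1) κ T)
    (hU : ∀ s, 1 ≤ s → s ≤ T → ∀ k ≤ i, ‖U k s T‖ ^ 2 * (T ^ m * s ^ 4) ≤ A ^ 2)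
    (hr : 1 ≤ r) (hrT : r ≤ T) (hi : i ≤ N + 1) :
    ‖V i r T‖ ^ 2 * (T ^ m * r ^ 2) ≤ (D + (1 + cF i) * A) ^ 2 := by
  have hT : 1 ≤ T := hr.trans hrT
  have hwp : 0 < T ^ m := by positivity
  set w := √(T ^ m) with hw
  have w0 : 0 < w := Real.sqrt_pos.2 hwp
  have w2 : w ^ 2 = T ^ m := Real.sq_sqrt hwp.le
  have cV := fun k => cont_line (S.cV k) T
  have hcF := cF_nonneg i
  have hV1 : ∀ s, 1 ≤ s → s ≤ T → ‖V (i+1) s T‖ ≤ (1 + cF i) * A / w * (1 / s ^ 2) := by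
    intro s h1 h2
    obtain ⟨q, hq, hq2, hqA, hqB⟩ := G.q h1 h2 le_rfl hκ
    have hq1 : q ≤ 1 := by
      have : q ^ 2 ≤ 1 := by
        rw [hq2, div_le_one (by positivity)]; nlinarith
      nlinarith
    have hUS : ∀ k ≤ i, ‖U k s T‖ ≤ A / (w * s ^ 2) := by
      intro k hk
      rw [le_div_iff₀ (by positivity)]
      refine le_of_sq_le_sq ?_ hA0
      calc _ = ‖U k s T‖ ^ 2 * (T ^ m * s ^ 4) := by rw [← w2]; ring
        _ ≤ _ := hU s h1 h2 k hk
    have hF := F3_bound2 (A := fun k => U k s T) (B := fun k => V k s T) (j := i)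
      (S := A / (w * s ^ 2)) (by positivity) (fun k hk => (hqA k (by omega)).trans hq1)
      (fun k hk => (hqB k (by omega)).trans hq1) hUS
    rw [S.Vs i s T h2, norm_mul]
    have e1 : ‖-(Complex.I / 2)‖ = 1 / 2 := by simp
    rw [e1]
    have := norm_add_le (U i s T) (F3 (fun k => U k s T) (fun k => V k s T) i)
    have h3 := hUS i le_rfl
    have h4 : 0 ≤ A / (w * s ^ 2) := by positivity
    calc _ ≤ 1 / 2 * (A / (w * s ^ 2) + cF i * (A / (w * s ^ 2))) := by gcongr; linarith
      _ ≤ (1 + cF i) * (A / (w * s ^ 2)) := by nlinarith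
      _ = _ := by field_simp
  obtain ⟨hii, hib⟩ := int_inv_sq hr hrT
  have ftc := intervalIntegral.integral_eq_sub_of_hasDerivAt_of_le hrT
    (f := fun s => V i s T) (cV i).continuousOn
    (fun s hs => S.dVr i s T hs.2) ((cV (i+1)).intervalIntegrable _ _)
  have hb : ‖V i r T‖ ≤ ‖V i T T‖ + (1 + cF i) * A / w * (1 / r) := by
    have e : V i r T = V i T T - ∫ s in r..T, V (i+1) s T := by rw [ftc]; ring
    rw [e]
    refine (norm_sub_le _ _).trans (add_le_add le_rfl ?_)
    refine (intervalIntegral.norm_integral_le_integral_norm hrT).trans ?_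
    calc _ ≤ ∫ s in r..T, (1 + cF i) * A / w * (1 / s ^ 2) := by
          refine intervalIntegral.integral_mono_on hrT ((cV (i+1)).norm.intervalIntegrable _ _)
            (hii.const_mul _) fun s hs => hV1 s (hr.trans hs.1) hs.2
      _ ≤ _ := by
          rw [intervalIntegral.integral_const_mul]
          exact mul_le_mul_of_nonneg_left hib (by positivity)
  have hdat : ‖V i T T‖ * (w * r) ≤ D := by
    refine le_of_sq_le_sq ?_ hD0
    calc _ = ‖V i T T‖ ^ 2 * (T ^ m * r ^ 2) := by rw [← w2]; ring
      _ ≤ ‖V i T T‖ ^ 2 * (T ^ (N+6)) := by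
        refine mul_le_mul_of_nonneg_left ?_ (by positivity)
        calc T ^ m * r ^ 2 ≤ T ^ m * T ^ 2 := by gcongr
          _ = T ^ (m+2) := by rw [← pow_add]
          _ ≤ T ^ (N+6) := pow_le_pow_right₀ hT (by omega)
      _ ≤ _ := (hD T hT i (by omega)).2
  have hfin : ‖V i r T‖ * (w * r) ≤ D + (1 + cF i) * A := by
    calc _ ≤ (‖V i T T‖ + (1 + cF i) * A / w * (1 / r)) * (w * r) := by gcongr
      _ = ‖V i T T‖ * (w * r) + (1 + cF i) * A := by field_simp
      _ ≤ _ := by linarith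
  calc _ = (‖V i r T‖ * (w * r)) ^ 2 := by rw [← w2]; ring
    _ ≤ _ := by gcongr

lemma Small.le_one {N : ℕ} {κ : ℝ} (h : Small N κ) : κ ≤ 1 := by
  obtain ⟨h0, h1⟩ := h
  have hK := KF_ge_one (N+3)
  have : (1:ℝ) ≤ 28 * (((N+3:ℕ):ℝ) + 1) * KF (N+3) := by
    have h1 : (1:ℝ) ≤ 28 * (((N+3:ℕ):ℝ) + 1) := by
      have : (0:ℝ) ≤ ((N+3:ℕ):ℝ) := Nat.cast_nonneg _
      linarith
    nlinarith
  nlinarith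

lemma apriori (N m p : ℕ) (hmp : m + p = N + 3) (hp : 3 ≤ p) : ∃ C : ℝ, 0 ≤ C ∧
    ∀ (U V : ℕ → ℝ → ℝ → ℂ) (κ T D : ℝ), Sys U V → Small N κ → Good U V (N+1) κ T → 1 ≤ T →
      Data U V N D → 0 ≤ D → ∀ r, 1 ≤ r → r ≤ T → ∀ i < p, i ≤ N + 1 →
      ‖U i r T‖ ^ 2 * (T ^ m * r ^ 2) ≤ C * D ^ 2 ∧
      ‖V i r T‖ ^ 2 * (T ^ m * r ^ 2) ≤ C * D ^ 2 := by
  obtain ⟨C, hC, H⟩ := levels N m p hmp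
  have hK := KF_ge_one (N+3)
  have hU : ∀ (U V : ℕ → ℝ → ℝ → ℂ) (κ T D : ℝ), Sys U V → Small N κ → Good U V (N+1) κ T → 1 ≤ T →
      Data U V N D → 0 ≤ D → ∀ r, 1 ≤ r → r ≤ T → ∀ i < p, 
      ‖U i r T‖ ^ 2 * (T ^ m * r ^ 4) ≤ ((C + 1) * D) ^ 2 := by
    intro U V κ T D S hκ G hT hD hD0 r hr hrT i hi
    have h1 := pt_U S hmp hD (H U V κ T D S hκ G hT hD).1 hr hrT hi
    calc _ ≤ ‖U i r T‖ ^ 2 * (T ^ m * r ^ (p+1)) := by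
          gcongr
          omega
      _ ≤ _ := h1
      _ ≤ _ := by rw [mul_pow]; gcongr; nlinarith
  refine ⟨((C+1) + (1 + (1 + KF (N+3)) * (C + 1))) ^ 2, by positivity, ?_⟩
  intro U V κ T D S hκ G hT hD hD0 r hr hrT i hi hi2
  constructor
  · calc _ ≤ ‖U i r T‖ ^ 2 * (T ^ m * r ^ 4) := by
          gcongr
          norm_num
      _ ≤ _ := hU U V κ T D S hκ G hT hD hD0 r hr hrT i hi
      _ ≤ _ := by
        rw [mul_pow]
        have : 0 ≤ (1 + (1 + KF (N+3)) * (C + 1)) := by positivity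
        refine mul_le_mul_of_nonneg_right (pow_le_pow_left₀ (by positivity) ?_ 2) (by positivity)
        linarith
  · refine (pt_V S (m := m) (by omega) hD hD0 (A := (C+1) * D) (by positivity) hκ.1 hκ.le_one G
      (fun s h1 h2 k hk => hU U V κ T D S hκ G hT hD hD0 s h1 h2 k (by omega)) hr hrT hi2).trans ?_
    have h2 : cF i ≤ KF (N+3) := cF_le_KF (by omega)
    have h3 := cF_nonneg i
    calc _ = ((1 + (1 + cF i) * (C+1)) ^ 2) * D ^ 2 := by ring
      _ ≤ _ := by
        refine mul_le_mul_of_nonneg_right (pow_le_pow_left₀ (by positivity) ?_ 2) (by positivity)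
        nlinarith

lemma cont_vert {U : ℝ → ℝ → ℂ} (h : Continuous (Function.uncurry U)) (r : ℝ) :
    Continuous fun e => U r e := h.comp (continuous_const.prodMk continuous_id)

lemma bootstrap {U V : ℕ → ℝ → ℝ → ℂ} (S : Sys U V) {N : ℕ} {κ D C : ℝ} (hκ : 0 < κ)
    (hD : Data U V N D) (hDκ : D ^ 2 ≤ κ / 2) (hCκ : C * D ^ 2 ≤ κ / 2)
    (H : ∀ T, 1 ≤ T → Good U V (N+1) κ T → ∀ r, 1 ≤ r → r ≤ T → ∀ i ≤ N + 1,
      ‖U i r T‖ ^ 2 * (r * T) ≤ C * D ^ 2 ∧ ‖V i r T‖ ^ 2 * (r * T) ≤ C * D ^ 2) (T : ℝ) :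
    Good U V (N+1) κ T := by
  by_contra hbad
  let K : Set (ℝ × ℝ) := {p | 1 ≤ p.1 ∧ p.1 ≤ p.2 ∧ p.2 ≤ T}
  have hKc : IsCompact K := by
    refine (isCompact_Icc (a := ((1:ℝ), (1:ℝ))) (b := (T, T))).of_isClosed_subset ?_ ?_
    · exact (isClosed_le continuous_const continuous_fst).inter
        ((isClosed_le continuous_fst continuous_snd).inter (isClosed_le continuous_snd continuous_const))
    · rintro ⟨a, b⟩ ⟨h1, h2, h3⟩
      simp only at h1 h2 h3
      exact ⟨⟨h1, h1.trans h2⟩, ⟨h2.trans h3, h3⟩⟩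
  let B : Set (ℝ × ℝ) := ⋃ i ∈ Finset.range (N+2),
    ({p : ℝ × ℝ | κ ≤ ‖U i p.1 p.2‖ ^ 2 * (p.1 * p.2)} ∪ {p : ℝ × ℝ | κ ≤ ‖V i p.1 p.2‖ ^ 2 * (p.1 * p.2)})
  have hBc : IsClosed B := by
    refine isClosed_biUnion_finset fun i _ => IsClosed.union ?_ ?_
    · exact isClosed_le continuous_const (((S.cU i).norm.pow 2).mul (continuous_fst.mul continuous_snd))
    · exact isClosed_le continuous_const (((S.cV i).norm.pow 2).mul (continuous_fst.mul continuous_snd))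
  have hne : (K ∩ B).Nonempty := by
    unfold Good at hbad
    push Not at hbad
    obtain ⟨r, e, h1, h2, h3, i, hi, h4⟩ := hbad
    refine ⟨(r, e), ⟨h1, h2, h3⟩, ?_⟩
    simp only [B, mem_iUnion]
    refine ⟨i, by simp; omega, ?_⟩
    by_cases h5 : ‖U i r e‖ ^ 2 * (r * e) ≤ κ
    · exact Or.inr (h4 h5).le
    · exact Or.inl (not_le.1 h5).le
  obtain ⟨⟨r0, e0⟩, ⟨⟨k1, k2, k3⟩, hB0⟩, hmin⟩ :=
    (hKc.inter_right hBc).exists_isMinOn hne continuous_snd.continuousOn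
  simp only at k1 k2 k3
  have hgood : ∀ s, s < e0 → Good U V (N+1) κ s := by
    intro s hs r e h1 h2 h3 i hi
    by_contra hcon
    have hmem : (r, e) ∈ K ∩ B := by
      refine ⟨⟨h1, h2, by simp only; linarith⟩, ?_⟩
      simp only [B, mem_iUnion]
      refine ⟨i, by simp; omega, ?_⟩
      by_cases h5 : ‖U i r e‖ ^ 2 * (r * e) ≤ κ
      · refine Or.inr ?_
        by_contra h6
        exact hcon ⟨h5, (not_le.1 h6).le⟩
      · exact Or.inl (not_le.1 h5).le
    have := hmin hmem
    simp only [mem_ofPred_eq] at this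
    linarith
  have hlt : ∀ i ≤ N+1, ‖U i r0 e0‖ ^ 2 * (r0 * e0) ≤ κ / 2 ∧ ‖V i r0 e0‖ ^ 2 * (r0 * e0) ≤ κ / 2 := by
    intro i hi
    rcases k2.eq_or_lt with rfl | hlt
    · have hw : r0 * r0 ≤ r0 ^ (N+6) := by
        rw [← sq]; exact pow_le_pow_right₀ k1 (by omega)
      obtain ⟨a, b⟩ := hD r0 k1 i (by omega)
      exact ⟨(mul_le_mul_of_nonneg_left hw (by positivity)).trans (a.trans hDκ),
        (mul_le_mul_of_nonneg_left hw (by positivity)).trans (b.trans hDκ)⟩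
    · have hev : ∀ᶠ s in 𝓝[<] e0, s ∈ Ioo r0 e0 := Ioo_mem_nhdsLT hlt
      constructor
      · refine le_of_tendsto (x := 𝓝[<] e0) (((((cont_vert (S.cU i) r0).norm.pow 2).mul
          (continuous_const.mul continuous_id)).tendsto e0).mono_left nhdsWithin_le_nhds) ?_
        filter_upwards [hev] with s hs
        exact (H s (k1.trans hs.1.le) (hgood s hs.2) r0 k1 hs.1.le i hi).1.trans hCκ
      · refine le_of_tendsto (x := 𝓝[<] e0) (((((cont_vert (S.cV i) r0).norm.pow 2).mul
          (continuous_const.mul continuous_id)).tendsto e0).mono_left nhdsWithin_le_nhds) ?_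
        filter_upwards [hev] with s hs
        exact (H s (k1.trans hs.1.le) (hgood s hs.2) r0 k1 hs.1.le i hi).2.trans hCκ
  simp only [B, mem_iUnion] at hB0
  obtain ⟨i, hi, h⟩ := hB0
  have := hlt i (by simp at hi; omega)
  rcases h with h | h
  · simp only [mem_ofPred_eq] at h; linarith [this.1]
  · simp only [mem_ofPred_eq] at h; linarith [this.2]

lemma abstract_main (N : ℕ) (hN : 1 ≤ N) : ∃ ε > (0:ℝ), ∃ C : ℝ, 0 ≤ C ∧
    ∀ (U V : ℕ → ℝ → ℝ → ℂ) (D : ℝ), Sys U V → Data U V N D → 0 ≤ D → D ≤ ε →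
      ∀ r e, 1 ≤ r → r ≤ e → ‖U 0 r e‖ ^ 2 * e ^ N ≤ C * D ^ 2 ∧ ‖V 0 r e‖ ^ 2 * e ^ N ≤ C * D ^ 2 := by
  obtain ⟨C1, hC1, H1⟩ := apriori N 1 (N+2) (by omega) (by omega)
  obtain ⟨C2, hC2, H2⟩ := apriori N N 3 rfl le_rfl
  have hK := KF_ge_one (N+3)
  have hJ : 0 < 28 * (((N+3:ℕ):ℝ) + 1) * KF (N+3) := by positivity
  set κ : ℝ := 1 / (28 * (((N+3:ℕ):ℝ) + 1) * KF (N+3)) with hκd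
  have hκ : 0 < κ := by positivity
  have hsm : Small N κ := ⟨hκ.le, by rw [hκd, mul_one_div_cancel hJ.ne']⟩
  refine ⟨√(κ / (2 * (C1 + 1))), Real.sqrt_pos.2 (by positivity), C2, hC2, ?_⟩
  intro U V D S hD hD0 hDe r e hr hre
  have hD2 : (C1 + 1) * D ^ 2 ≤ κ / 2 := by
    have : D ^ 2 ≤ κ / (2 * (C1 + 1)) := by
      rw [← Real.sq_sqrt (show 0 ≤ κ / (2 * (C1 + 1)) by positivity)]
      gcongr
    rw [le_div_iff₀ (by positivity)] at this
    linarith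
  have hDD := sq_nonneg D
  have hCD : 0 ≤ C1 * D ^ 2 := by positivity
  have G := bootstrap S hκ hD (by linarith) (C := C1) (by linarith) (fun T hT G s hs hsT i hi => by
    have := H1 U V κ T D S hsm G hT hD hD0 s hs hsT i (by omega) hi
    have hw : s * T ≤ T ^ 1 * s ^ 2 := by
      have : 0 ≤ s * T * (s - 1) := by
        have : 0 ≤ s - 1 := by linarith
        positivity
      nlinarith
    exact ⟨(mul_le_mul_of_nonneg_left hw (by positivity)).trans this.1,
      (mul_le_mul_of_nonneg_left hw (by positivity)).trans this.2⟩) e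
  have := H2 U V κ e D S hsm G (hr.trans hre) hD hD0 r hr hre 0 (by omega) (by omega)
  have hw : e ^ N ≤ e ^ N * r ^ 2 := by
    have : 0 ≤ e := by linarith
    exact le_mul_of_one_le_right (by positivity) (one_le_pow₀ hr)
  exact ⟨(mul_le_mul_of_nonneg_left hw (by positivity)).trans this.1,
      (mul_le_mul_of_nonneg_left hw (by positivity)).trans this.2⟩

end Thir

namespace Thir
open Set Filter Topology
open scoped ContDiff

/-- the region above the diagonal -/
def KK : Set (ℝ × ℝ) := {p | p.1 ≤ p.2}
/-- its interior -/
def KI : Set (ℝ × ℝ) := {p | p.1 < p.2}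

lemma KI_open : IsOpen KI := isOpen_lt continuous_fst continuous_snd
lemma KI_sub : KI ⊆ KK := fun p hp => le_of_lt (show p.1 < p.2 from hp)
lemma KK_conv : Convex ℝ KK := by
  have : KK = (fun p : ℝ × ℝ => p.1 - p.2) ⁻¹' Iic 0 := by ext p; simp [KK]
  rw [this]
  exact (convex_Iic (0:ℝ)).is_linear_preimage (LinearMap.isLinear (LinearMap.fst ℝ ℝ ℝ - LinearMap.snd ℝ ℝ ℝ))
lemma KI_int : KI ⊆ interior KK := interior_maximal KI_sub KI_open
lemma KK_int_ne : (interior KK).Nonempty := ⟨(0, 1), KI_int (by simp [KI])⟩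
lemma KK_ud : UniqueDiffOn ℝ KK := uniqueDiffOn_convex KK_conv KK_int_ne
lemma KK_cl : KK ⊆ closure KI := by
  rintro ⟨a, b⟩ hab
  have hab : a ≤ b := hab
  refine mem_closure_of_tendsto (f := fun n : ℕ => ((a, b + 1 / ((n:ℝ) + 1)) : ℝ × ℝ)) (b := atTop) ?_ ?_
  · refine tendsto_const_nhds.prodMk_nhds ?_
    simpa using (tendsto_const_nhds (x := b)).add tendsto_one_div_add_atTop_nhds_zero_nat
  · refine Eventually.of_forall fun n => ?_
    have : (0:ℝ) < 1 / ((n:ℝ) + 1) := by positivity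
    show a < b + 1 / ((n:ℝ) + 1)
    linarith

/-- smooth up to the boundary -/
def Sm (G : ℝ × ℝ → ℂ) : Prop := ContDiffOn ℝ ∞ G KK

def dR (G : ℝ × ℝ → ℂ) : ℝ × ℝ → ℂ := fun p => fderivWithin ℝ G KK p (1, 0)
def dE (G : ℝ × ℝ → ℂ) : ℝ × ℝ → ℂ := fun p => fderivWithin ℝ G KK p (0, 1)

lemma Sm.fd {G : ℝ × ℝ → ℂ} (h : Sm G) : ContDiffOn ℝ ∞ (fderivWithin ℝ G KK) KK :=
  ContDiffOn.fderivWithin h KK_ud (by simp)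
lemma Sm.dR {G : ℝ × ℝ → ℂ} (h : Sm G) : Sm (dR G) := h.fd.clm_apply contDiffOn_const
lemma Sm.dE {G : ℝ × ℝ → ℂ} (h : Sm G) : Sm (dE G) := h.fd.clm_apply contDiffOn_const

lemma Sm.hasF {G : ℝ × ℝ → ℂ} (h : Sm G) {p : ℝ × ℝ} (hp : p ∈ KK) :
    HasFDerivWithinAt G (fderivWithin ℝ G KK p) KK p :=
  ((h.differentiableOn (by simp)) p hp).hasFDerivWithinAt

lemma Sm.lineR {G : ℝ × ℝ → ℂ} (h : Sm G) {r e : ℝ} (hp : r ≤ e) :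
    HasDerivWithinAt (fun r => G (r, e)) (Thir.dR G (r, e)) (Iic e) r :=
  (h.hasF (p := (r, e)) hp).comp_hasDerivWithinAt r
    (f := fun r => ((r, e) : ℝ × ℝ)) ((hasDerivWithinAt_id r _).prodMk (hasDerivWithinAt_const r _ e))
    (fun _ hy => hy)

lemma Sm.lineE {G : ℝ × ℝ → ℂ} (h : Sm G) {r e : ℝ} (hp : r ≤ e) :
    HasDerivWithinAt (fun e => G (r, e)) (Thir.dE G (r, e)) (Ici r) e :=
  (h.hasF (p := (r, e)) hp).comp_hasDerivWithinAt e
    (f := fun e => ((r, e) : ℝ × ℝ)) ((hasDerivWithinAt_const e _ r).prodMk (hasDerivWithinAt_id e _))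
    (fun _ hy => hy)

lemma Sm.diag {G : ℝ × ℝ → ℂ} (h : Sm G) (s : ℝ) :
    HasDerivAt (fun s => G (s, s)) (Thir.dR G (s, s) + Thir.dE G (s, s)) s := by
  have := (h.hasF (p := (s, s)) (le_refl s)).comp_hasDerivWithinAt s (s := univ)
    (f := fun s => ((s, s) : ℝ × ℝ)) ((hasDerivWithinAt_id s _).prodMk (hasDerivWithinAt_id s _))
    (fun y _ => le_refl y)
  rw [hasDerivWithinAt_univ] at this
  refine this.congr_deriv ?_
  unfold Thir.dR Thir.dE
  rw [← map_add]
  simp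

lemma Sm.comm {G : ℝ × ℝ → ℂ} (h : Sm G) {p : ℝ × ℝ} (hp : p ∈ KK) :
    Thir.dE (Thir.dR G) p = Thir.dR (Thir.dE G) p := by
  have hsym : IsSymmSndFDerivWithinAt ℝ G KK p := by
    refine ContDiffWithinAt.isSymmSndFDerivWithinAt (h p hp) (n := ∞) (by simpa using WithTop.coe_le_coe.2 (le_top : (2:ℕ∞) ≤ ⊤)) KK_ud ?_ hp
    rw [(KK_conv).closure_interior_eq_closure_of_nonempty_interior KK_int_ne]
    exact subset_closure hp
  have hd : DifferentiableWithinAt ℝ (fderivWithin ℝ G KK) KK p :=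
    (h.fd.differentiableOn (by simp)) p hp
  have key : ∀ w z : ℝ × ℝ, fderivWithin ℝ (fun q => fderivWithin ℝ G KK q w) KK p z =
      fderivWithin ℝ (fderivWithin ℝ G KK) KK p z w := by
    intro w z
    rw [fderivWithin_clm_apply (KK_ud p hp) hd (differentiableWithinAt_const w)]
    simp
  unfold Thir.dE Thir.dR
  rw [key, key]
  exact hsym _ _

lemma uniq_r {f : ℝ → ℂ} {a b : ℂ} {r e : ℝ} (h : r ≤ e) (h1 : HasDerivWithinAt f a (Iic e) r)
    (h2 : HasDerivWithinAt f b (Iic e) r) : a = b :=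
  (uniqueDiffOn_Iic e r h).eq_deriv _ h1 h2

lemma Sm.iter {G : ℝ × ℝ → ℂ} (h : Sm G) (j : ℕ) : Sm (Thir.dR^[j] G) := by
  induction j with
  | zero => exact h
  | succ j ih => rw [Function.iterate_succ_apply']; exact ih.dR

section
variable {g h : ℝ × ℝ → ℂ}

lemma iter_line (hg : Sm g) {r e : ℝ} (hp : r ≤ e) (k : ℕ) :
    HasDerivWithinAt (fun r => (dR^[k] g) (r, e)) ((dR^[k+1] g) (r, e)) (Iic e) r := by
  rw [Function.iterate_succ_apply']; exact (hg.iter k).lineR hp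

lemma eqV (hg : Sm g) (hh : Sm h)
    (E : ∀ p ∈ KK, dR h p = -(Complex.I / 2) * (g p + g p * (starRingEnd ℂ) (g p) * h p)) (j : ℕ) :
    ∀ p ∈ KK, (dR^[j+1] h) p = -(Complex.I / 2) *
      ((dR^[j] g) p + F3 (fun k => (dR^[k] g) p) (fun k => (dR^[k] h) p) j) := by
  induction j with
  | zero => intro p hp; rw [F3_zero]; exact E p hp
  | succ j ih =>
    rintro ⟨r, e⟩ hp
    have hp : r ≤ e := hp
    refine uniq_r hp (iter_line hh hp (j+1)) ?_
    have h1 := ((iter_line hg hp j).add (F3_hasDeriv (fun k => iter_line hg hp k)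
      (fun k => iter_line hh hp k) j)).const_mul (-(Complex.I / 2))
    exact h1.congr (fun y hy => ih (y, e) hy) (ih (r, e) hp)

lemma eqU (hg : Sm g) (hh : Sm h)
    (E : ∀ p ∈ KK, dE g p = (Complex.I / 2) * (h p + h p * (starRingEnd ℂ) (h p) * g p)) (j : ℕ) :
    ∀ p ∈ KK, dE (dR^[j] g) p = (Complex.I / 2) *
      ((dR^[j] h) p + F3 (fun k => (dR^[k] h) p) (fun k => (dR^[k] g) p) j) := by
  induction j with
  | zero => intro p hp; rw [F3_zero]; exact E p hp
  | succ j ih =>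
    rintro ⟨r, e⟩ hp
    rw [Function.iterate_succ_apply', (hg.iter j).comm hp]
    have hp : r ≤ e := hp
    refine uniq_r hp ((hg.iter j).dE.lineR hp) ?_
    have h1 := ((iter_line hh hp j).add (F3_hasDeriv (fun k => iter_line hh hp k)
      (fun k => iter_line hg hp k) j)).const_mul ((Complex.I / 2))
    exact h1.congr (fun y hy => ih (y, e) hy) (ih (r, e) hp)

/-- continuous extension across the diagonal -/
def ext (G : ℝ × ℝ → ℂ) (r e : ℝ) : ℂ := G (r, max r e)

lemma ext_eq {G : ℝ × ℝ → ℂ} {r e : ℝ} (h : r ≤ e) : ext G r e = G (r, e) := by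
  simp [ext, max_eq_right h]

lemma ext_cont {G : ℝ × ℝ → ℂ} (h : Sm G) : Continuous (Function.uncurry (ext G)) := by
  have : Continuous fun p : ℝ × ℝ => G (p.1, max p.1 p.2) :=
    h.continuousOn.comp_continuous (continuous_fst.prodMk (continuous_fst.max continuous_snd))
      (fun p => le_max_left p.1 p.2)
  exact this

lemma ext_r {G : ℝ × ℝ → ℂ} (h : Sm G) {r e : ℝ} (hre : r < e) :
    HasDerivAt (fun r => ext G r e) (ext (dR G) r e) r := by
  rw [ext_eq hre.le]
  refine ((h.lineR hre.le).hasDerivAt (Iic_mem_nhds hre)).congr_of_eventuallyEq ?_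
  filter_upwards [Iic_mem_nhds hre] with y hy
  exact ext_eq hy

lemma ext_e {G : ℝ × ℝ → ℂ} (h : Sm G) {r e : ℝ} (hre : r < e) :
    HasDerivAt (fun e => ext G r e) (ext (dE G) r e) e := by
  rw [ext_eq hre.le]
  refine ((h.lineE hre.le).hasDerivAt (Ici_mem_nhds hre)).congr_of_eventuallyEq ?_
  filter_upwards [Ici_mem_nhds hre] with y hy
  exact ext_eq hy

lemma sys_of (hg : Sm g) (hh : Sm h)
    (Eg : ∀ p ∈ KK, dE g p = (Complex.I / 2) * (h p + h p * (starRingEnd ℂ) (h p) * g p))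
    (Eh : ∀ p ∈ KK, dR h p = -(Complex.I / 2) * (g p + g p * (starRingEnd ℂ) (g p) * h p)) :
    Sys (fun j => ext (dR^[j] g)) (fun j => ext (dR^[j] h)) where
  cU j := ext_cont (hg.iter j)
  cV j := ext_cont (hh.iter j)
  dUr j r e hre := by
    have := ext_r (hg.iter j) hre
    rwa [← Function.iterate_succ_apply' (f := dR)] at this
  dVr j r e hre := by
    have := ext_r (hh.iter j) hre
    rwa [← Function.iterate_succ_apply' (f := dR)] at this
  dUe j r e hre := by
    have := ext_e (hg.iter j) hre
    rw [ext_eq hre.le, eqU hg hh Eg j (r, e) hre.le] at this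
    simpa only [ext_eq hre.le] using this
  Vs j r e hre := by
    simp only [ext_eq hre]
    exact eqV hg hh Eh j (r, e) hre

lemma diag_of (hg : Sm g) (hh : Sm h)
    (Eg : ∀ p ∈ KK, dE g p = (Complex.I / 2) * (h p + h p * (starRingEnd ℂ) (h p) * g p)) (j : ℕ) (s : ℝ) :
    HasDerivAt (fun s => ext (dR^[j] g) s s) (ext (dR^[j+1] g) s s + Complex.I / 2 *
      (ext (dR^[j] h) s s + F3 (fun k => ext (dR^[k] h) s s) (fun k => ext (dR^[k] g) s s) j)) s := by
  simp only [ext_eq (le_refl _)]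
  have := (hg.iter j).diag s
  rwa [eqU hg hh Eg j (s, s) (le_refl s), ← Function.iterate_succ_apply' (f := dR)] at this

end

/-- change of coordinates -/
def nul (u : ℝ → ℝ → ℂ) : ℝ × ℝ → ℂ := fun p => u (1 + (p.2 - p.1) / 2) ((p.2 + p.1) / 2 - 1)

lemma nul_sm {u : ℝ → ℝ → ℂ}
    (hu : ContDiffOn ℝ (⊤ : ℕ∞) (fun p : ℝ × ℝ => u p.1 p.2) {p : ℝ × ℝ | 1 ≤ p.1}) : Sm (nul u) := by
  have : ContDiff ℝ ∞ (fun p : ℝ × ℝ => ((1 + (p.2 - p.1) / 2, (p.2 + p.1) / 2 - 1) : ℝ × ℝ)) := by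
    fun_prop
  refine hu.comp this.contDiffOn ?_
  intro p hp
  have hp : p.1 ≤ p.2 := hp
  show 1 ≤ 1 + (p.2 - p.1) / 2
  linarith

lemma nul_der {u : ℝ → ℝ → ℂ}
    (hu : ContDiffOn ℝ (⊤ : ℕ∞) (fun p : ℝ × ℝ => u p.1 p.2) {p : ℝ × ℝ | 1 ≤ p.1}) {p : ℝ × ℝ}
    (hp : p ∈ KI) :
    dE (nul u) p = 1 / 2 * (pt u (1 + (p.2 - p.1) / 2) ((p.2 + p.1) / 2 - 1) +
      px u (1 + (p.2 - p.1) / 2) ((p.2 + p.1) / 2 - 1)) ∧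
    dR (nul u) p = -(1 / 2) * (pt u (1 + (p.2 - p.1) / 2) ((p.2 + p.1) / 2 - 1) -
      px u (1 + (p.2 - p.1) / 2) ((p.2 + p.1) / 2 - 1)) := by
  have hp' : p.1 < p.2 := hp
  set t := 1 + (p.2 - p.1) / 2 with ht
  set x := (p.2 + p.1) / 2 - 1 with hx
  have ht1 : 1 < t := by rw [ht]; linarith
  have hnh : {p : ℝ × ℝ | 1 ≤ p.1} ∈ 𝓝 ((t, x) : ℝ × ℝ) :=
    mem_of_superset ((isOpen_lt continuous_const continuous_fst).mem_nhds
      (show (1:ℝ) < ((t, x) : ℝ × ℝ).1 from ht1)) (fun q hq => le_of_lt (show 1 < q.1 from hq))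
  have hd : DifferentiableAt ℝ (fun p : ℝ × ℝ => u p.1 p.2) (t, x) :=
    (hu.contDiffAt hnh).differentiableAt (by simp)
  obtain ⟨L, hL⟩ := hd
  have h1 : pt u t x = L (1, 0) := by
    have := hL.comp_hasDerivAt t (f := fun s => ((s, x) : ℝ × ℝ)) ((hasDerivAt_id t).prodMk (hasDerivAt_const t x))
    exact this.deriv
  have h2 : px u t x = L (0, 1) := by
    have := hL.comp_hasDerivAt x (f := fun s => ((t, s) : ℝ × ℝ)) ((hasDerivAt_const x t).prodMk (hasDerivAt_id x))
    exact this.deriv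
  have hsm := nul_sm hu
  have e1 : dE (nul u) p = L (1/2, 1/2) := by
    have a := (hsm.lineE (r := p.1) (e := p.2) hp'.le).hasDerivAt (Ici_mem_nhds hp')
    have b := hL.comp_hasDerivAt p.2 (f := fun e => ((1 + (e - p.1) / 2, (e + p.1) / 2 - 1) : ℝ × ℝ))
      (f' := (1/2, 1/2))
      (((((hasDerivAt_id p.2).sub_const p.1).div_const 2).const_add 1).prodMk
        ((((hasDerivAt_id p.2).add_const p.1).div_const 2).sub_const 1))
    exact a.unique b
  have e2 : dR (nul u) p = L (-1/2, 1/2) := by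
    have a := (hsm.lineR (r := p.1) (e := p.2) hp'.le).hasDerivAt (Iic_mem_nhds hp')
    have b := hL.comp_hasDerivAt p.1 (f := fun e => ((1 + (p.2 - e) / 2, (p.2 + e) / 2 - 1) : ℝ × ℝ))
      (f' := (-1/2, 1/2))
      (((((hasDerivAt_id p.1).const_sub p.2).div_const 2).const_add 1).prodMk
        ((((hasDerivAt_id p.1).const_add p.2).div_const 2).sub_const 1))
    exact a.unique b
  have dec : ∀ a b : ℝ, L (a, b) = a * L (1, 0) + b * L (0, 1) := by
    intro a b
    have : ((a, b) : ℝ × ℝ) = a • ((1:ℝ), (0:ℝ)) + b • ((0:ℝ), (1:ℝ)) := by simp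
    rw [this, map_add, map_smul, map_smul]; simp
  rw [e1, e2, h1, h2, dec, dec (-1/2)]
  push_cast
  constructor <;> ring

lemma build {u v : ℝ → ℝ → ℂ}
    (hu : ContDiffOn ℝ (⊤ : ℕ∞) (fun p : ℝ × ℝ => u p.1 p.2) {p : ℝ × ℝ | 1 ≤ p.1})
    (hv : ContDiffOn ℝ (⊤ : ℕ∞) (fun p : ℝ × ℝ => v p.1 p.2) {p : ℝ × ℝ | 1 ≤ p.1})
    (hT : ∀ t x : ℝ, 1 < t →
      pt u t x + px u t x = Complex.I * v t x + Complex.I * (‖v t x‖ ^ 2 : ℝ) * u t x ∧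
      pt v t x - px v t x = Complex.I * u t x + Complex.I * (‖u t x‖ ^ 2 : ℝ) * v t x) :
    ∃ U V : ℕ → ℝ → ℝ → ℂ, Sys U V ∧
      (∀ r e, r ≤ e → U 0 r e = u (1 + (e - r) / 2) ((e + r) / 2 - 1)) ∧
      (∀ r e, r ≤ e → V 0 r e = v (1 + (e - r) / 2) ((e + r) / 2 - 1)) ∧
      (∀ j s, HasDerivAt (fun s => U j s s) (U (j+1) s s + Complex.I / 2 *
        (V j s s + F3 (fun k => V k s s) (fun k => U k s s) j)) s) := by
  have hg := nul_sm hu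
  have hh := nul_sm hv
  have cc : ∀ {G : ℝ × ℝ → ℂ}, ContinuousOn G KK → ContinuousOn (fun p => (starRingEnd ℂ) (G p)) KK :=
    fun h => Complex.continuous_conj.comp_continuousOn h
  have Eg : ∀ p ∈ KK, dE (nul u) p = (Complex.I / 2) *
      (nul v p + nul v p * (starRingEnd ℂ) (nul v p) * nul u p) := by
    refine EqOn.of_subset_closure (s := KI) ?_ hg.dE.continuousOn ?_ KI_sub KK_cl
    · intro p hp
      have hp' : p.1 < p.2 := hp
      simp only
      rw [(nul_der hu hp).1, (hT _ _ (by linarith)).1, Complex.mul_conj]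
      simp only [nul, Complex.normSq_eq_norm_sq]
      push_cast; ring
    · exact continuousOn_const.mul (hh.continuousOn.add
        ((hh.continuousOn.mul (cc hh.continuousOn)).mul hg.continuousOn))
  have Eh : ∀ p ∈ KK, dR (nul v) p = -(Complex.I / 2) *
      (nul u p + nul u p * (starRingEnd ℂ) (nul u p) * nul v p) := by
    refine EqOn.of_subset_closure (s := KI) ?_ hh.dR.continuousOn ?_ KI_sub KK_cl
    · intro p hp
      have hp' : p.1 < p.2 := hp
      simp only
      rw [(nul_der hv hp).2, (hT _ _ (by linarith)).2, Complex.mul_conj]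
      simp only [nul, Complex.normSq_eq_norm_sq]
      push_cast; ring
    · exact continuousOn_const.mul (hg.continuousOn.add
        ((hg.continuousOn.mul (cc hg.continuousOn)).mul hh.continuousOn))
  refine ⟨_, _, sys_of hg hh Eg Eh, ?_, ?_, fun j s => diag_of hg hh Eg j s⟩
  · intro r e h; simp only [Function.iterate_zero, id, ext_eq h]; rfl
  · intro r e h; simp only [Function.iterate_zero, id, ext_eq h]; rfl

end Thir

namespace Thir
open Set Filter Topology
open scoped ContDiff SchwartzMap

lemma schw_sob (g : 𝓢(ℝ, ℂ)) (x : ℝ) :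
    ‖g x‖ ^ 2 ≤ (∫ y, ‖g y‖ ^ 2) + ∫ y, ‖deriv g y‖ ^ 2 := by
  set g' : 𝓢(ℝ, ℂ) := SchwartzMap.derivCLM ℝ ℂ g with hg'
  have e : ∀ y, deriv g y = g' y := fun y => (SchwartzMap.derivCLM_apply ℝ g y).symm
  have i1 : Integrable (fun y => ‖g y‖ ^ 2) := (g.memLp 2).integrable_norm_pow (by norm_num)
  have i2 : Integrable (fun y => ‖g' y‖ ^ 2) := (g'.memLp 2).integrable_norm_pow (by norm_num)
  have hb : ∀ y, |2 * ((starRingEnd ℂ) (g y) * g' y).re| ≤ ‖g y‖ ^ 2 + ‖g' y‖ ^ 2 := by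
    intro y
    have h1 : |((starRingEnd ℂ) (g y) * g' y).re| ≤ ‖g y‖ * ‖g' y‖ := by
      refine (Complex.abs_re_le_norm _).trans ?_
      simp
    rw [abs_mul, abs_two]
    nlinarith [sq_nonneg (‖g y‖ - ‖g' y‖)]
  have c : Continuous fun y => 2 * ((starRingEnd ℂ) (g y) * g' y).re :=
    continuous_const.mul (Complex.continuous_re.comp
      ((Complex.continuous_conj.comp g.continuous).mul g'.continuous))
  have i3 : Integrable (fun y => 2 * ((starRingEnd ℂ) (g y) * g' y).re) :=
    (i1.add i2).mono' c.aestronglyMeasurable (Eventually.of_forall fun y => by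
      simpa using hb y)
  have ht : Tendsto (fun y => ‖g y‖ ^ 2) atBot (𝓝 0) := by
    have : Tendsto g atBot (𝓝 0) := (SchwartzMap.toZeroAtInfty g).zero_at_infty'.mono_left atBot_le_cocompact
    simpa using this.norm.pow 2
  have hd : ∀ y, HasDerivAt (fun y => ‖g y‖ ^ 2) (2 * ((starRingEnd ℂ) (g y) * g' y).re) y := by
    intro y
    refine hasDerivAt_nsq ?_
    rw [← e]; exact (g.differentiable y).hasDerivAt
  have ftc := integral_Iic_of_hasDerivAt_of_tendsto (a := x) (hd x).continuousAt.continuousWithinAt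
    (fun y _ => hd y) i3.integrableOn ht
  have : ‖g x‖ ^ 2 = ∫ y in Iic x, 2 * ((starRingEnd ℂ) (g y) * g' y).re := by rw [ftc]; ring
  rw [this]
  simp only [e]
  rw [← integral_add i1 i2]
  have i12 : Integrable (fun y => ‖g y‖ ^ 2 + ‖g' y‖ ^ 2) := i1.add i2
  have s1 : (∫ y in Iic x, 2 * ((starRingEnd ℂ) (g y) * g' y).re)
      ≤ ∫ y in Iic x, (‖g y‖ ^ 2 + ‖g' y‖ ^ 2) :=
    setIntegral_mono i3.integrableOn i12.integrableOn fun y => (le_abs_self _).trans (hb y)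
  have s2 : (∫ y in Iic x, (‖g y‖ ^ 2 + ‖g' y‖ ^ 2)) ≤ ∫ y, (‖g y‖ ^ 2 + ‖g' y‖ ^ 2) :=
    setIntegral_le_integral i12 (Eventually.of_forall fun y => by
      show (0:ℝ) ≤ _
      positivity)
  exact s1.trans s2

lemma schw_iter (g : 𝓢(ℝ, ℂ)) (j : ℕ) : ∃ G : 𝓢(ℝ, ℂ), ∀ y, G y = deriv^[j] g y := by
  induction j with
  | zero => exact ⟨g, fun y => rfl⟩
  | succ j ih =>
    obtain ⟨G, hG⟩ := ih
    refine ⟨SchwartzMap.derivCLM ℝ ℂ G, fun y => ?_⟩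
    rw [SchwartzMap.derivCLM_apply, Function.iterate_succ_apply']
    congr 1
    exact funext hG

lemma schw_sobNorm (g : 𝓢(ℝ, ℂ)) {j k : ℕ} (h : j < k) (x : ℝ) :
    ‖iteratedDeriv j g x‖ ≤ sobNorm k g := by
  rw [iteratedDeriv_eq_iterate]
  obtain ⟨G, hG⟩ := schw_iter g j
  have := schw_sob G x
  have hf : (G : ℝ → ℂ) = deriv^[j] g := funext hG
  rw [hf, ← Function.iterate_succ_apply' (f := deriv)] at this
  unfold sobNorm
  refine Real.le_sqrt_of_sq_le (this.trans ?_)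
  have hsub : ({j, j+1} : Finset ℕ) ⊆ Finset.range (k+1) := by
    intro x hx; simp at hx ⊢; omega
  have h2 := Finset.sum_le_sum_of_subset_of_nonneg (f := fun i => ∫ y, ‖deriv^[i] g y‖ ^ 2) hsub
    (fun _ _ _ => integral_nonneg fun _ => by positivity)
  rwa [Finset.sum_pair (by omega)] at h2

/-- smooth with derivatives up to order n bounded by C E -/
def PB (n : ℕ) (E : ℝ → ℝ) (C : ℝ) (φ : ℝ → ℂ) : Prop :=
  ContDiff ℝ ∞ φ ∧ ∀ k ≤ n, ∀ x, ‖iteratedDeriv k φ x‖ ≤ C * E x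

lemma le_infty' (k : ℕ) : (k : WithTop ℕ∞) ≤ ∞ := by exact_mod_cast le_top

lemma PB.mono {n m : ℕ} {E F : ℝ → ℝ} {C C' : ℝ} {φ : ℝ → ℂ} (h : PB n E C φ) (hm : m ≤ n)
    (hE : ∀ x, C * E x ≤ C' * F x) : PB m F C' φ :=
  ⟨h.1, fun k hk x => (h.2 k (hk.trans hm) x).trans (hE x)⟩

lemma PB.mul {n : ℕ} {E F : ℝ → ℝ} {C C' : ℝ} {φ ψ : ℝ → ℂ} (hφ : PB n E C φ) (hψ : PB n F C' ψ) :
    PB n (fun x => E x * F x) (2 ^ n * (C * C')) (fun x => φ x * ψ x) := by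
  refine ⟨hφ.1.mul hψ.1, fun k hk x => ?_⟩
  have := norm_iteratedFDeriv_mul_le hφ.1 hψ.1 x (n := k) (le_infty' k)
  simp only [norm_iteratedFDeriv_eq_norm_iteratedDeriv] at this
  refine this.trans ?_
  have hp : 0 ≤ C * E x := (norm_nonneg _).trans (hφ.2 0 (by omega) x)
  have hq : 0 ≤ C' * F x := (norm_nonneg _).trans (hψ.2 0 (by omega) x)
  calc _ ≤ ∑ i ∈ Finset.range (k+1), (k.choose i : ℝ) * ((C * E x) * (C' * F x)) := by
        refine Finset.sum_le_sum fun i hi => ?_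
        simp at hi
        rw [mul_assoc]
        have h1 := hφ.2 i (by omega) x
        have h2 := hψ.2 (k - i) (by omega) x
        gcongr
    _ = 2 ^ k * ((C * E x) * (C' * F x)) := by
        rw [← Finset.sum_mul]
        have := Nat.sum_range_choose k
        congr 1
        exact_mod_cast this
    _ ≤ 2 ^ n * ((C * E x) * (C' * F x)) := by
        gcongr
        norm_num
    _ = _ := by ring

lemma PB.cmul {n : ℕ} {E : ℝ → ℝ} {C : ℝ} {φ : ℝ → ℂ} (h : PB n E C φ) (c : ℂ) :
    PB n E (‖c‖ * C) (fun x => c * φ x) := by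
  refine ⟨contDiff_const.mul h.1, fun k hk x => ?_⟩
  rw [iteratedDeriv_const_mul_field, norm_mul, mul_assoc]
  exact mul_le_mul_of_nonneg_left (h.2 k hk x) (norm_nonneg _)

lemma PB.add {n : ℕ} {E : ℝ → ℝ} {C C' : ℝ} {φ ψ : ℝ → ℂ} (hφ : PB n E C φ) (hψ : PB n E C' ψ) :
    PB n E (C + C') (fun x => φ x + ψ x) := by
  refine ⟨hφ.1.add hψ.1, fun k hk x => ?_⟩
  rw [iteratedDeriv_fun_add (hφ.1.contDiffAt.of_le (le_infty' k)) (hψ.1.contDiffAt.of_le (le_infty' k)), add_mul]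
  exact (norm_add_le _ _).trans (add_le_add (hφ.2 k hk x) (hψ.2 k hk x))

lemma PB.zero {n : ℕ} {E : ℝ → ℝ} : PB n E 0 (fun _ => 0) := by
  refine ⟨contDiff_const, fun k hk x => ?_⟩
  have : iteratedDeriv k (fun _ : ℝ => (0:ℂ)) x = 0 := by
    rw [iteratedDeriv_const]; split_ifs <;> rfl
  rw [this]; simp

lemma PB.sum {ι : Type*} {n : ℕ} {E : ℝ → ℝ} {s : Finset ι} {C : ι → ℝ} {φ : ι → ℝ → ℂ}
    (h : ∀ i ∈ s, PB n E (C i) (φ i)) : PB n E (∑ i ∈ s, C i) (fun x => ∑ i ∈ s, φ i x) := by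
  classical
  induction s using Finset.induction_on with
  | empty => simpa using PB.zero
  | insert a s ha ih =>
    simp only [Finset.sum_insert ha]
    exact (h a (by simp)).add (ih fun i hi => h i (by simp [hi]))

lemma PB.conj {n : ℕ} {E : ℝ → ℝ} {C : ℝ} {φ : ℝ → ℂ} (h : PB n E C φ) :
    PB n E C (fun x => (starRingEnd ℂ) (φ x)) := by
  refine ⟨Complex.conjCLE.contDiff.comp h.1, fun k hk x => ?_⟩
  have := LinearIsometryEquiv.norm_iteratedFDeriv_comp_left (𝕜 := ℝ) Complex.conjLIE φ x k
  rw [norm_iteratedFDeriv_eq_norm_iteratedDeriv, norm_iteratedFDeriv_eq_norm_iteratedDeriv] at this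
  refine le_of_eq_of_le this (h.2 k hk x)

lemma PB.deriv {n : ℕ} {E : ℝ → ℝ} {C : ℝ} {φ : ℝ → ℂ} (h : PB (n+1) E C φ) :
    PB n E C (deriv φ) := by
  refine ⟨(contDiff_infty_iff_deriv.1 h.1).2, fun k hk x => ?_⟩
  rw [← iteratedDeriv_succ']
  exact h.2 (k+1) (by omega) x

/-- 1 + x² raised to a real power -/
def br (β : ℝ) (x : ℝ) : ℝ := (1 + x ^ 2) ^ β

lemma br_pos (β x : ℝ) : 0 < br β x := Real.rpow_pos_of_pos (by positivity) _

lemma br_hasDeriv (β x : ℝ) : HasDerivAt (br β) (2 * β * (x * br (β - 1) x)) x := by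
  have h1 : HasDerivAt (fun x : ℝ => 1 + x ^ 2) (2 * x) x := by
    simpa using ((hasDerivAt_id x).pow 2).const_add 1
  have := h1.rpow_const (p := β) (Or.inl (by positivity))
  refine this.congr_deriv ?_
  unfold br; ring

lemma br_smooth (β : ℝ) : ContDiff ℝ ∞ (br β) := by
  unfold br
  exact ContDiff.rpow_const_of_ne (by fun_prop) (fun x => by positivity)

lemma br_csmooth (β : ℝ) : ContDiff ℝ ∞ (fun x => (br β x : ℂ)) :=
  Complex.ofRealCLM.contDiff.comp (br_smooth β)

lemma id_PB (n : ℕ) : PB n (br 1) 1 (fun x : ℝ => (x : ℂ)) := by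
  refine ⟨Complex.ofRealCLM.contDiff, fun k hk x => ?_⟩
  have hb : br 1 x = 1 + x ^ 2 := by simp [br]
  have hd : _root_.deriv (fun x : ℝ => (x : ℂ)) = fun _ => 1 := by
    ext y; exact ((hasDerivAt_id y).ofReal_comp).deriv
  rw [hb]
  rcases k with _ | k
  · simp only [iteratedDeriv_zero, Complex.norm_real, Real.norm_eq_abs]
    rw [abs_le]; constructor <;> nlinarith [sq_nonneg (x-1), sq_nonneg (x+1)]
  · rw [iteratedDeriv_succ', hd, iteratedDeriv_const]
    split_ifs
    · simp; positivity
    · simp; positivity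

lemma br_PB (n : ℕ) : ∀ β : ℝ, ∃ C : ℝ, 0 ≤ C ∧ PB n (br β) C (fun x => (br β x : ℂ)) := by
  induction n with
  | zero =>
    intro β
    refine ⟨1, by norm_num, br_csmooth β, fun k hk x => ?_⟩
    obtain rfl : k = 0 := by omega
    simp [abs_of_pos (br_pos β x)]
  | succ n ih =>
    intro β
    obtain ⟨C, hC, h⟩ := ih (β - 1)
    have h1 := ((id_PB n).mul h).cmul (2 * β : ℂ)
    refine ⟨1 + ‖(2 * β : ℂ)‖ * (2 ^ n * (1 * C)), by positivity, br_csmooth β, fun k hk x => ?_⟩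
    have hp := br_pos β x
    rcases k with _ | k
    · simp only [iteratedDeriv_zero, Complex.norm_real, Real.norm_eq_abs, abs_of_pos hp]
      have : 0 ≤ ‖(2 * β : ℂ)‖ * (2 ^ n * (1 * C)) * br β x := by positivity
      linarith
    · have hd : _root_.deriv (fun x : ℝ => (br β x : ℂ)) = fun x : ℝ => (2 * β : ℂ) * ((x : ℂ) * (br (β-1) x : ℂ)) := by
        ext y
        rw [((br_hasDeriv β y).ofReal_comp).deriv]
        push_cast; ring
      rw [iteratedDeriv_succ', hd]
      refine (h1.2 k (by omega) x).trans ?_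
      have hm : br 1 x * br (β-1) x = br β x := by
        unfold br
        rw [← Real.rpow_add (by positivity)]; congr 1; ring
      simp only
      rw [hm]
      nlinarith

lemma jb_pow (σ x : ℝ) : jb x ^ σ = br (σ / 2) x := by
  unfold jb br
  rw [Real.sqrt_eq_rpow, ← Real.rpow_mul (by positivity)]; congr 1; ring

/-- weighted Sobolev embedding for Schwartz functions -/
lemma base_PB (n : ℕ) (σ : ℝ) : ∃ C : ℝ, 0 ≤ C ∧ ∀ f : ℝ → ℂ, ContDiff ℝ ∞ f →
    (∀ m b : ℕ, ∃ C : ℝ, ∀ x : ℝ, |x| ^ m * ‖deriv^[b] f x‖ ≤ C) →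
    PB n (fun x => wSobNorm σ (n+1) f * jb x ^ (-σ)) C f := by
  obtain ⟨C, hC, h⟩ := br_PB n (-σ / 2)
  refine ⟨2 ^ n * (C * 1), by positivity, fun f hf hd => ?_⟩
  let F : 𝓢(ℝ, ℂ) := ⟨f, hf, fun k m => by
    obtain ⟨C, hC⟩ := hd k m
    refine ⟨C, fun x => ?_⟩
    rw [norm_iteratedFDeriv_eq_norm_iteratedDeriv, iteratedDeriv_eq_iterate]
    exact hC x⟩
  let H : 𝓢(ℝ, ℂ) := SchwartzMap.smulLeftCLM ℂ (fun x : ℝ => (1 + ‖x‖ ^ 2) ^ (σ/2)) F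
  have hH : ∀ x, H x = (br (σ/2) x : ℂ) * f x := by
    intro x
    have := SchwartzMap.smulLeftCLM_apply_apply (Function.hasTemperateGrowth_one_add_norm_sq_rpow ℝ (σ/2)) F x
    refine this.trans ?_
    simp only [Complex.real_smul, Real.norm_eq_abs, sq_abs]
    rfl
  have hw : wSobNorm σ (n+1) f = sobNorm (n+1) H := by
    unfold wSobNorm
    congr 1
    ext x
    rw [hH, jb_pow]
  have hHP : PB n (fun _ => wSobNorm σ (n+1) f) 1 H := by
    refine ⟨H.smooth _, fun k hk x => ?_⟩
    rw [one_mul, hw]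
    exact schw_sobNorm H (by omega) x
  have hm := h.mul hHP
  have e1 : (fun x => (br (-σ/2) x : ℂ) * H x) = f := by
    ext x
    rw [hH, ← mul_assoc, ← Complex.ofReal_mul]
    have : br (-σ/2) x * br (σ/2) x = 1 := by
      unfold br
      rw [← Real.rpow_add (by positivity)]
      rw [show -σ/2 + σ/2 = 0 by ring, Real.rpow_zero]
    rw [this]; simp
  rw [e1] at hm
  refine hm.mono le_rfl fun x => le_of_eq ?_
  rw [jb_pow]; ring

end Thir

namespace Thir
open Set Filter Topology
open scoped ContDiff

lemma PB.mul' {n : ℕ} {E : ℝ → ℝ} (hE : ∀ x, 0 ≤ E x ∧ E x ≤ 1) {C C' : ℝ} (hC : 0 ≤ C) (hC' : 0 ≤ C')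
    {φ ψ : ℝ → ℂ} (hφ : PB n E C φ) (hψ : PB n E C' ψ) :
    PB n E (2 ^ n * (C * C')) (fun x => φ x * ψ x) := by
  refine (hφ.mul hψ).mono le_rfl fun x => ?_
  have := hE x
  refine mul_le_mul_of_nonneg_left ?_ (by positivity)
  nlinarith [this.1, this.2]

lemma F3_PB (n j : ℕ) {C : ℝ} (hC : 0 ≤ C) : ∃ C' : ℝ, 0 ≤ C' ∧ ∀ E : ℝ → ℝ,
    (∀ x, 0 ≤ E x ∧ E x ≤ 1) → ∀ A B : ℕ → ℝ → ℂ, (∀ k ≤ j, PB n E C (A k)) →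
    (∀ k ≤ j, PB n E C (B k)) → PB n E C' (fun s => F3 (fun k => A k s) (fun k => B k s) j) := by
  let cM : ℕ → ℝ := fun k => ∑ p ∈ Finset.HasAntidiagonal.antidiagonal k, ‖(k.choose p.1 : ℂ)‖ * (2 ^ n * (C * C))
  have hcM : ∀ k, 0 ≤ cM k := fun k => Finset.sum_nonneg fun _ _ => by positivity
  refine ⟨∑ p ∈ Finset.HasAntidiagonal.antidiagonal j, ‖(j.choose p.1 : ℂ)‖ * (2 ^ n * (cM p.1 * C)),
    Finset.sum_nonneg fun p _ => ?_, ?_⟩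
  · have := hcM p.1; positivity
  · intro E hE A B hA hB
    have hM : ∀ k ≤ j, PB n E (cM k) (fun s => M2 (fun k => A k s) k) := by
      intro k hk
      unfold M2 L2
      refine PB.sum fun p hp => ?_
      rw [Finset.HasAntidiagonal.mem_antidiagonal] at hp
      exact ((hA p.1 (by omega)).mul' hE hC hC (hA p.2 (by omega)).conj).cmul _
    unfold F3
    unfold L2
    refine PB.sum fun p hp => ?_
    rw [Finset.HasAntidiagonal.mem_antidiagonal] at hp
    exact ((hM p.1 (by omega)).mul' hE (hcM _) hC (hB p.2 (by omega))).cmul _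

lemma diag_PB (M : ℕ) {C0 : ℝ} (hC0 : 0 ≤ C0) (i : ℕ) : i ≤ M → ∃ C : ℝ, 0 ≤ C ∧
    ∀ (E : ℝ → ℝ) (U V : ℕ → ℝ → ℂ), (∀ x, 0 ≤ E x ∧ E x ≤ 1) →
    (∀ j s, HasDerivAt (U j) (U (j+1) s + Complex.I / 2 *
        (V j s + F3 (fun k => V k s) (fun k => U k s) j)) s) →
    (∀ j s, V (j+1) s = -(Complex.I / 2) * (U j s + F3 (fun k => U k s) (fun k => V k s) j)) →
    PB M E C0 (U 0) → PB M E C0 (V 0) →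
    ∀ j ≤ i, PB (M - i) E C (U j) ∧ PB (M - i) E C (V j) := by
  induction i with
  | zero =>
    intro _
    refine ⟨C0, hC0, fun E U V hE hU hV h1 h2 j hj => ?_⟩
    obtain rfl : j = 0 := by omega
    exact ⟨h1, h2⟩
  | succ i ih =>
    intro hi
    obtain ⟨C, hC, H⟩ := ih (by omega)
    obtain ⟨n, hn⟩ : ∃ n, M - i = n + 1 := ⟨M - i - 1, by omega⟩
    have hn' : M - (i+1) = n := by omega
    obtain ⟨C', hC', HF⟩ := F3_PB n i hC
    have nI : ‖-(Complex.I / 2)‖ = 1 / 2 := by simp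
    refine ⟨C + (C + C'), by positivity, fun E U V hE hU hV h1 h2 j hj => ?_⟩
    have IH := H E U V hE hU hV h1 h2
    rw [hn] at IH
    rw [hn']
    have low : ∀ k ≤ i, PB n E C (U k) ∧ PB n E C (V k) := fun k hk =>
      ⟨(IH k hk).1.mono (by omega) fun _ => le_rfl, (IH k hk).2.mono (by omega) fun _ => le_rfl⟩
    rcases Nat.lt_or_ge i j with hlt | hle
    · obtain rfl : j = i + 1 := by omega
      have F1 := HF E hE V U (fun k hk => (low k hk).2) (fun k hk => (low k hk).1)
      have F2 := HF E hE U V (fun k hk => (low k hk).1) (fun k hk => (low k hk).2)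
      have a1 := ((IH i le_rfl).1.deriv).add ((((low i le_rfl).2).add F1).cmul (-(Complex.I / 2)))
      have a2 := ((((low i le_rfl).1).add F2).cmul (-(Complex.I / 2)))
      rw [nI] at a1 a2
      have e1 : U (i+1) = fun s => deriv (U i) s + -(Complex.I / 2) *
          (V i s + F3 (fun k => V k s) (fun k => U k s) i) := by
        ext s; rw [(hU i s).deriv]; ring
      have e2 : V (i+1) = fun s => -(Complex.I / 2) *
          (U i s + F3 (fun k => U k s) (fun k => V k s) i) := by
        ext s; exact hV i s
      rw [e1, e2]
      constructor
      · refine a1.mono le_rfl fun x => mul_le_mul_of_nonneg_right ?_ (hE x).1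
        linarith
      · refine a2.mono le_rfl fun x => mul_le_mul_of_nonneg_right ?_ (hE x).1
        linarith
    · have := low j hle
      exact ⟨this.1.mono le_rfl fun x => mul_le_mul_of_nonneg_right (by linarith) (hE x).1,
        this.2.mono le_rfl fun x => mul_le_mul_of_nonneg_right (by linarith) (hE x).1⟩

lemma diag_bd (M : ℕ) {C0 : ℝ} (hC0 : 0 ≤ C0) : ∃ C : ℝ, 0 ≤ C ∧
    ∀ (E : ℝ → ℝ) (U V : ℕ → ℝ → ℂ), (∀ x, 0 ≤ E x ∧ E x ≤ 1) →
    (∀ j s, HasDerivAt (U j) (U (j+1) s + Complex.I / 2 *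
        (V j s + F3 (fun k => V k s) (fun k => U k s) j)) s) →
    (∀ j s, V (j+1) s = -(Complex.I / 2) * (U j s + F3 (fun k => U k s) (fun k => V k s) j)) →
    PB M E C0 (U 0) → PB M E C0 (V 0) →
    ∀ j ≤ M, ∀ s, ‖U j s‖ ≤ C * E s ∧ ‖V j s‖ ≤ C * E s := by
  obtain ⟨C, hC, H⟩ := diag_PB M hC0 M le_rfl
  refine ⟨C, hC, fun E U V hE hU hV h1 h2 j hj s => ?_⟩
  have := H E U V hE hU hV h1 h2 j hj
  exact ⟨by simpa using this.1.2 0 (by omega) s, by simpa using this.2.2 0 (by omega) s⟩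

lemma one_le_jb (x : ℝ) : 1 ≤ jb x := by
  unfold jb
  rw [Real.one_le_sqrt]; nlinarith [sq_nonneg x]

lemma abs_le_jb (x : ℝ) : |x| ≤ jb x := by
  unfold jb
  rw [← Real.sqrt_sq_eq_abs]
  exact Real.sqrt_le_sqrt (by linarith)

lemma px_iter (u : ℝ → ℝ → ℂ) (b : ℕ) (t x : ℝ) : (px^[b] u) t x = deriv^[b] (u t) x := by
  induction b generalizing x with
  | zero => rfl
  | succ b ih =>
    rw [Function.iterate_succ_apply', Function.iterate_succ_apply']
    show deriv (fun y => (px^[b] u) t y) x = _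
    congr 1
    exact funext ih

lemma slice_smooth {u : ℝ → ℝ → ℂ}
    (hu : ContDiffOn ℝ (⊤ : ℕ∞) (fun p : ℝ × ℝ => u p.1 p.2) {p : ℝ × ℝ | 1 ≤ p.1}) :
    ContDiff ℝ ∞ (u 1) := by
  have := hu.comp (f := fun x : ℝ => ((1, x) : ℝ × ℝ)) (s := univ)
    (by fun_prop) (fun x _ => le_refl (1:ℝ))
  exact contDiffOn_univ.1 this

lemma wSob_nonneg (σ : ℝ) (k : ℕ) (f : ℝ → ℂ) : 0 ≤ wSobNorm σ k f := Real.sqrt_nonneg _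

/-- decay for x ≥ 0 -/
lemma half (N : ℕ) (hN : 1 ≤ N) :
    ∃ ε > (0 : ℝ), ∃ C : ℝ, 0 ≤ C ∧ ∀ u v : ℝ → ℝ → ℂ,
      ContDiffOn ℝ (⊤ : ℕ∞) (fun p : ℝ × ℝ => u p.1 p.2) {p : ℝ × ℝ | 1 ≤ p.1} →
      ContDiffOn ℝ (⊤ : ℕ∞) (fun p : ℝ × ℝ => v p.1 p.2) {p : ℝ × ℝ | 1 ≤ p.1} →
      (∀ m b : ℕ, ∃ C : ℝ, ∀ x : ℝ, |x| ^ m * ‖deriv^[b] (u 1) x‖ ≤ C) →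
      (∀ m b : ℕ, ∃ C : ℝ, ∀ x : ℝ, |x| ^ m * ‖deriv^[b] (v 1) x‖ ≤ C) →
      (∀ t x : ℝ, 1 < t →
        pt u t x + px u t x = Complex.I * v t x + Complex.I * (‖v t x‖ ^ 2 : ℝ) * u t x ∧
        pt v t x - px v t x = Complex.I * u t x + Complex.I * (‖u t x‖ ^ 2 : ℝ) * v t x) →
      ∀ D : ℝ, D = wSobNorm (3 + (N : ℝ) / 2) (N + 4) (u 1) +
            wSobNorm (3 + (N : ℝ) / 2) (N + 4) (v 1) →
        D ≤ ε →
        ∀ t x : ℝ, 1 ≤ t → t ≤ jb x → 0 ≤ x →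
          ‖u t x‖ + ‖v t x‖ ≤ C * jb x ^ (-(N : ℝ) / 2) * D := by
  set σ : ℝ := 3 + (N : ℝ) / 2 with hσ
  obtain ⟨ε, hε, C1, hC1, H⟩ := abstract_main N hN
  obtain ⟨C0, hC0, HB⟩ := base_PB (N+3) σ
  obtain ⟨Cd, hCd, HD⟩ := diag_bd (N+3) hC0
  let K : ℝ := Cd * 2 ^ (N+6) + 1
  have hK : 0 < K := by positivity
  refine ⟨min 1 (ε / K), by positivity, 2 * (C1 + 1) * K, by positivity, ?_⟩
  intro u v hu hv su sv hT D hD hDε t x ht htx hx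
  have hA := wSob_nonneg σ (N+4) (u 1)
  have hB := wSob_nonneg σ (N+4) (v 1)
  have hD0 : 0 ≤ D := by rw [hD]; positivity
  have hD1 : D ≤ 1 := hDε.trans (min_le_left _ _)
  have hDK : K * D ≤ ε := by
    have := hDε.trans (min_le_right _ _)
    rw [le_div_iff₀ hK] at this
    linarith
  obtain ⟨U, V, S, hU0, hV0, hdiag⟩ := build hu hv hT
  have hσ0 : 0 < σ := by positivity
  let E : ℝ → ℝ := fun s => D * jb (s - 1) ^ (-σ)
  have hjσ : ∀ y, 0 ≤ jb y ^ (-σ) ∧ jb y ^ (-σ) ≤ 1 := fun y =>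
    ⟨Real.rpow_nonneg (by linarith [one_le_jb y]) _,
      Real.rpow_le_one_of_one_le_of_nonpos (one_le_jb y) (by linarith)⟩
  have hE : ∀ s, 0 ≤ E s ∧ E s ≤ 1 := by
    intro s
    have := hjσ (s-1)
    exact ⟨mul_nonneg hD0 this.1, mul_le_one₀ hD1 this.1 this.2⟩
  have shift : ∀ f : ℝ → ℂ, PB (N+3) (fun x => wSobNorm σ (N+4) f * jb x ^ (-σ)) C0 f →
      wSobNorm σ (N+4) f ≤ D → PB (N+3) E C0 (fun s => f (s - 1)) := by
    intro f hf hle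
    refine ⟨hf.1.comp (by fun_prop), fun k hk s => ?_⟩
    rw [iteratedDeriv_comp_sub_const]
    refine (hf.2 k hk (s-1)).trans ?_
    refine mul_le_mul_of_nonneg_left ?_ hC0
    exact mul_le_mul_of_nonneg_right hle (hjσ (s-1)).1
  have e0 : ∀ s : ℝ, (1 + (s - s) / 2 = 1) ∧ (s + s) / 2 - 1 = s - 1 := fun s => ⟨by ring, by ring⟩
  have PU : PB (N+3) E C0 (fun s => U 0 s s) := by
    have := shift (u 1) (HB (u 1) (slice_smooth hu) su) (by rw [hD]; linarith)
    convert this using 2 with s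
    rw [hU0 s s le_rfl, (e0 s).1, (e0 s).2]
  have PV : PB (N+3) E C0 (fun s => V 0 s s) := by
    have := shift (v 1) (HB (v 1) (slice_smooth hv) sv) (by rw [hD]; linarith)
    convert this using 2 with s
    rw [hV0 s s le_rfl, (e0 s).1, (e0 s).2]
  have hbd := HD E (fun j s => U j s s) (fun j s => V j s s) hE hdiag
    (fun j s => S.Vs j s s le_rfl) PU PV
  have key : ∀ s, 1 ≤ s → ∀ z : ℂ, ‖z‖ ≤ Cd * E s → ‖z‖ ^ 2 * s ^ (N+6) ≤ (K * D) ^ 2 := by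
    intro s hs z hz
    have hj := one_le_jb (s-1)
    have hj0 : 0 < jb (s-1) := by linarith
    have hsj : s ≤ 2 * jb (s-1) := by
      have := (le_abs_self _).trans (abs_le_jb (s-1))
      linarith
    have hpow : (jb (s-1) ^ (-σ)) ^ 2 * jb (s-1) ^ (N+6) = 1 := by
      rw [← Real.rpow_natCast (jb (s-1)) (N+6), ← Real.rpow_natCast _ 2, ← Real.rpow_mul hj0.le,
        ← Real.rpow_add hj0]
      have : -σ * ((2:ℕ):ℝ) + ((N+6 : ℕ) : ℝ) = 0 := by rw [hσ]; push_cast; ring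
      rw [this, Real.rpow_zero]
    have h2 : (1:ℝ) ≤ 2 ^ (N+6) := one_le_pow₀ (by norm_num)
    calc ‖z‖ ^ 2 * s ^ (N+6) ≤ (Cd * E s) ^ 2 * (2 * jb (s-1)) ^ (N+6) := by gcongr
      _ = Cd ^ 2 * D ^ 2 * 2 ^ (N+6) * ((jb (s-1) ^ (-σ)) ^ 2 * jb (s-1) ^ (N+6)) := by
          simp only [E]; ring
      _ = Cd ^ 2 * D ^ 2 * 2 ^ (N+6) := by rw [hpow, mul_one]
      _ ≤ Cd ^ 2 * D ^ 2 * (2 ^ (N+6)) ^ 2 := by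
          refine mul_le_mul_of_nonneg_left ?_ (by positivity)
          nlinarith
      _ = (Cd * 2 ^ (N+6)) ^ 2 * D ^ 2 := by ring
      _ ≤ K ^ 2 * D ^ 2 := by
          refine mul_le_mul_of_nonneg_right (pow_le_pow_left₀ (by positivity) ?_ 2) (by positivity)
          simp only [K]; linarith
      _ = _ := by ring
  have data : Data U V N (K * D) := fun s hs i hi =>
    ⟨key s hs _ (hbd i hi s).1, key s hs _ (hbd i hi s).2⟩
  set r := x - t + 2 with hr
  set e := x + t with he
  have hjx : jb x ≤ 1 + x := by
    unfold jb; rw [Real.sqrt_le_left (by linarith)]; nlinarith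
  have hjx0 : 0 < jb x := by linarith [one_le_jb x]
  have hr1 : 1 ≤ r := by rw [hr]; linarith
  have hre : r ≤ e := by rw [hr, he]; linarith
  have hej : jb x ≤ e := by rw [he]; linarith
  have hres := H U V (K * D) S data (by positivity) hDK r e hr1 hre
  have c1 : 1 + (e - r) / 2 = t := by rw [hr, he]; ring
  have c2 : (e + r) / 2 - 1 = x := by rw [hr, he]; ring
  rw [hU0 r e hre, hV0 r e hre, c1, c2] at hres
  have fin : ∀ z : ℂ, ‖z‖ ^ 2 * e ^ N ≤ C1 * (K * D) ^ 2 → ‖z‖ ≤ (C1 + 1) * K * D * jb x ^ (-(N:ℝ)/2) := by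
    intro z hz
    have hp : (jb x ^ (-(N:ℝ)/2)) ^ 2 * jb x ^ N = 1 := by
      rw [← Real.rpow_natCast (jb x) N, ← Real.rpow_natCast _ 2, ← Real.rpow_mul hjx0.le,
        ← Real.rpow_add hjx0]
      have : -(N:ℝ)/2 * ((2:ℕ):ℝ) + (N : ℝ) = 0 := by push_cast; ring
      rw [this, Real.rpow_zero]
    have hnn : 0 ≤ jb x ^ (-(N:ℝ)/2) := Real.rpow_nonneg hjx0.le _
    refine le_of_sq_le_sq ?_ (by positivity)
    have hz2 : ‖z‖ ^ 2 * jb x ^ N ≤ C1 * (K * D) ^ 2 :=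
      le_trans (mul_le_mul_of_nonneg_left (pow_le_pow_left₀ hjx0.le hej N) (by positivity)) hz
    calc ‖z‖ ^ 2 = (‖z‖ ^ 2 * jb x ^ N) * (jb x ^ (-(N:ℝ)/2)) ^ 2 := by
          rw [mul_assoc, mul_comm (jb x ^ N), hp, mul_one]
      _ ≤ (C1 * (K * D) ^ 2) * (jb x ^ (-(N:ℝ)/2)) ^ 2 := by gcongr
      _ ≤ ((C1 + 1) ^ 2 * (K * D) ^ 2) * (jb x ^ (-(N:ℝ)/2)) ^ 2 := by
          gcongr; nlinarith
      _ = _ := by ring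
  have f1 := fin _ hres.1
  have f2 := fin _ hres.2
  linarith

end Thir

namespace Thir
open Set Filter Topology
open scoped ContDiff

lemma jb_neg (x : ℝ) : jb (-x) = jb x := by unfold jb; rw [neg_sq]

lemma norm_iter_neg (f : ℝ → ℂ) (b : ℕ) (x : ℝ) :
    ‖deriv^[b] (fun y => f (-y)) x‖ = ‖deriv^[b] f (-x)‖ := by
  rw [← iteratedDeriv_eq_iterate, ← iteratedDeriv_eq_iterate, iteratedDeriv_comp_neg, norm_smul]
  simp

lemma wSob_neg (σ : ℝ) (k : ℕ) (f : ℝ → ℂ) :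
    wSobNorm σ k (fun x => f (-x)) = wSobNorm σ k f := by
  unfold wSobNorm sobNorm
  congr 1
  refine Finset.sum_congr rfl fun j _ => ?_
  have e : (fun x => ((jb x ^ σ : ℝ) : ℂ) * f (-x)) =
      fun x => (fun y => ((jb y ^ σ : ℝ) : ℂ) * f y) (-x) := by
    ext x; simp only [jb_neg]
  rw [e]
  have h := fun x => norm_iter_neg (fun y => ((jb y ^ σ : ℝ) : ℂ) * f y) j x
  refine (integral_congr_ae (Eventually.of_forall fun x => ?_)).trans
    (integral_neg_eq_self (fun x => ‖deriv^[j] (fun y => ((jb y ^ σ : ℝ) : ℂ) * f y) x‖ ^ 2) volume)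
  show _ ^ 2 = _ ^ 2
  rw [h x]

lemma refl_smooth {u : ℝ → ℝ → ℂ}
    (hu : ContDiffOn ℝ (⊤ : ℕ∞) (fun p : ℝ × ℝ => u p.1 p.2) {p : ℝ × ℝ | 1 ≤ p.1}) :
    ContDiffOn ℝ (⊤ : ℕ∞) (fun p : ℝ × ℝ => (fun t x => u t (-x)) p.1 p.2) {p : ℝ × ℝ | 1 ≤ p.1} :=
  hu.comp (f := fun p : ℝ × ℝ => ((p.1, -p.2) : ℝ × ℝ)) (by fun_prop) (fun p hp => hp)

lemma px_refl (u : ℝ → ℝ → ℂ) (t x : ℝ) : px (fun t x => u t (-x)) t x = - px u t (-x) := by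
  unfold px
  exact deriv_comp_neg (fun y => u t y) x

lemma slu_data {u : ℝ → ℝ → ℂ} (h : SchwartzLocUnif u) :
    ∀ m b : ℕ, ∃ C : ℝ, ∀ x : ℝ, |x| ^ m * ‖deriv^[b] (u 1) x‖ ≤ C := by
  intro m b
  obtain ⟨C, hC⟩ := h 0 b m 1
  refine ⟨C, fun x => ?_⟩
  have := hC 1 ⟨le_rfl, le_rfl⟩ x
  rw [Function.iterate_zero, id, px_iter] at this
  exact this

lemma slu_data_neg {f : ℝ → ℂ} (h : ∀ m b : ℕ, ∃ C : ℝ, ∀ x : ℝ, |x| ^ m * ‖deriv^[b] f x‖ ≤ C) :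
    ∀ m b : ℕ, ∃ C : ℝ, ∀ x : ℝ, |x| ^ m * ‖deriv^[b] (fun y => f (-y)) x‖ ≤ C := by
  intro m b
  obtain ⟨C, hC⟩ := h m b
  refine ⟨C, fun x => ?_⟩
  rw [norm_iter_neg, ← abs_neg]
  exact hC (-x)

end Thir

/-- exterior decay of small solutions of the Thirring model in the region
1 ≤ t ≤ ⟨x⟩. -/
theorem cubic_dirac_exterior_decay (N : ℕ) (hN : 1 ≤ N) :
    ∃ ε > (0 : ℝ), ∃ C > (0 : ℝ), ∀ u v : ℝ → ℝ → ℂ,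
      ContDiffOn ℝ (⊤ : ℕ∞) (fun p : ℝ × ℝ => u p.1 p.2) {p : ℝ × ℝ | 1 ≤ p.1} →
      ContDiffOn ℝ (⊤ : ℕ∞) (fun p : ℝ × ℝ => v p.1 p.2) {p : ℝ × ℝ | 1 ≤ p.1} →
      SchwartzLocUnif u → SchwartzLocUnif v →
      Thirring u v →
      ∀ D : ℝ,
        D = wSobNorm (3 + (N : ℝ) / 2) (N + 4) (u 1) +
            wSobNorm (3 + (N : ℝ) / 2) (N + 4) (v 1) →
        D ≤ ε →
        ∀ t x : ℝ, 1 ≤ t → t ≤ jb x →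
          ‖u t x‖ + ‖v t x‖ ≤ C * jb x ^ (-(N : ℝ) / 2) * D := by
  obtain ⟨ε, hε, C, hC, H⟩ := Thir.half N hN
  refine ⟨ε, hε, C + 1, by linarith, ?_⟩
  intro u v hu hv su sv hT D hD hDε t x ht htx
  have hD0 : 0 ≤ D := by
    rw [hD]; exact add_nonneg (Thir.wSob_nonneg _ _ _) (Thir.wSob_nonneg _ _ _)
  have hj : 0 ≤ jb x ^ (-(N : ℝ) / 2) := Real.rpow_nonneg (Real.sqrt_nonneg _) _
  have du := Thir.slu_data su
  have dv := Thir.slu_data sv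
  have main : ‖u t x‖ + ‖v t x‖ ≤ C * jb x ^ (-(N : ℝ) / 2) * D := by
    rcases le_total 0 x with hx | hx
    · exact H u v hu hv du dv (fun t x h => hT t x h.le) D hD hDε t x ht htx hx
    · have := H (fun t x => v t (-x)) (fun t x => u t (-x)) (Thir.refl_smooth hv)
        (Thir.refl_smooth hu) (Thir.slu_data_neg dv) (Thir.slu_data_neg du)
        (fun t x h => by
          obtain ⟨h1, h2⟩ := hT t (-x) h.le
          rw [Thir.px_refl, Thir.px_refl]
          refine ⟨?_, ?_⟩
          · rw [← h2]
            show pt v t (-x) + -px v t (-x) = _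
            ring
          · rw [← h1]
            show pt u t (-x) - -px u t (-x) = _
            ring) D (by
          show D = wSobNorm _ _ (fun x => v 1 (-x)) + wSobNorm _ _ (fun x => u 1 (-x))
          rw [Thir.wSob_neg, Thir.wSob_neg, hD, add_comm]) hDε t (-x) ht
        (by rw [Thir.jb_neg]; exact htx) (by linarith)
      simp only [neg_neg, Thir.jb_neg] at this
      linarith
  have : C * jb x ^ (-(N : ℝ) / 2) * D ≤ (C + 1) * jb x ^ (-(N : ℝ) / 2) * D := by
    gcongr
    linarith
  exact main.trans this
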